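/- Fix T > 0 and S₀ > 0. With κ, κ̄, η, the payoff data as defined, and J₁(λ; t, y, z) := S₀^{y+z}·(κ̄(λ;y,z) − κ̄(λ;y,1)κ̄(λ;z,1)/κ̄(λ;1,1))·e^{κ(λ,y+z)t + (η(λ,y)+η(λ,z)−κ(λ,1)²/κ̄(λ;1,1))(T−t)}, let ε₁²(λ) := ∫_ℝ∫_ℝ∫₀ᵀ J₁(λ; t, z_u, z_v)·p(z_u)p(z_v) dt du dv for λ ∈ [0,1]. Then λ ↦ ε₁²(λ) is twice continuously differentiable on [0,1], ε₁²(0) = 0, (ε₁²)'(0) = 0, and ½·(ε₁²)''(0) = ¼σ⁴·(s₄ − s₃²)·∫₀ᵀ e^{−((μ+½σ²)²/σ²)(T−t)} ∫_ℝ D₂(t, S₀e^{μt+x})² dγ_{σ²t}(x) dt, where s₃ := (∫x³K(dx))/σ³, s₄ := (∫x⁴K(dx))/σ⁴, D₂ is the Black–Scholes cash greek of order 2, and γ_v denotes the Gaussian measure on ℝ with mean 0 and variance v. -/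

import Mathlib

open MeasureTheory ProbabilityTheory Complex Set

/-- Cumulant generating function `κ(λ, z)` of the interpolating family. -/
noncomputable def kappa (μ c : ℝ) (K : Measure ℝ) (lam : ℝ) (z : ℂ) : ℂ :=
  if lam = 0 then (μ : ℂ) * z + (((c + ∫ x : ℝ, x ^ 2 ∂K) : ℝ) : ℂ) / 2 * z ^ 2
  else (μ : ℂ) * z + (c : ℂ) / 2 * z ^ 2 +
    ((lam : ℂ) ^ 2)⁻¹ *
      ∫ x : ℝ, (Complex.exp ((lam : ℂ) * z * (x : ℂ)) - 1 - (lam : ℂ) * z * (x : ℂ)) ∂K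

noncomputable def kbar (μ c : ℝ) (K : Measure ℝ) (lam : ℝ) (y z : ℂ) : ℂ :=
  kappa μ c K lam (y + z) - kappa μ c K lam y - kappa μ c K lam z

noncomputable def gamLK (μ c : ℝ) (K : Measure ℝ) (lam : ℝ) (z : ℂ) : ℂ :=
  kbar μ c K lam z 1 / kbar μ c K lam 1 1

noncomputable def etaLK (μ c : ℝ) (K : Measure ℝ) (lam : ℝ) (z : ℂ) : ℂ :=
  kappa μ c K lam z - kappa μ c K lam 1 * gamLK μ c K lam z

noncomputable def cpowR (s : ℝ) (z : ℂ) : ℂ := Complex.exp (z * Real.log s)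

noncomputable def zLine (R y : ℝ) : ℂ := (R : ℂ) + (y : ℂ) * Complex.I

/-- Fourier transform `l̂(y) = ∫ l(x) e^{-ixy} dx`. -/
noncomputable def lhat (l : ℝ → ℝ) (y : ℝ) : ℂ :=
  ∫ x : ℝ, (l x : ℂ) * Complex.exp (-(Complex.I * (x : ℂ) * (y : ℂ)))

noncomputable def pCoef (l : ℝ → ℝ) (y : ℝ) : ℂ := lhat l y / (2 * (Real.pi : ℂ))

/-- Black-Scholes cash greek `D_n(t,s)` in integral form (with `C = D_0`). -/
noncomputable def cashGreek (σ2 T R : ℝ) (l : ℝ → ℝ) (n : ℕ) (t s : ℝ) : ℂ :=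
  ∫ y : ℝ, (∏ k ∈ Finset.range n, (zLine R y - (k : ℂ))) * cpowR s (zLine R y) *
    Complex.exp (((σ2 : ℂ) / 2) * zLine R y * (zLine R y - 1) * ((T : ℂ) - (t : ℂ))) * pCoef l y


set_option linter.unusedVariables false

section C2families
open Filter Topology

def PolyBd {α : Type*} (S : Set α) (w : α → ℝ) (G : ℝ → α → ℂ) : Prop :=
  ∃ C : ℝ, ∃ N : ℕ, 0 ≤ C ∧ ∀ a ∈ S, ∀ x ∈ Icc (0:ℝ) 1, ‖G x a‖ ≤ C * w a ^ N

lemma PolyBd.add {α : Type*} {S : Set α} {w : α → ℝ} (hw : ∀ a ∈ S, 1 ≤ w a) {G H : ℝ → α → ℂ}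
    (hG : PolyBd S w G) (hH : PolyBd S w H) : PolyBd S w (fun x a => G x a + H x a) := by
  obtain ⟨C, N, hC, h⟩ := hG
  obtain ⟨D, M, hD, h'⟩ := hH
  refine ⟨C + D, max N M, by positivity, fun a ha x hx => ?_⟩
  have h1 := hw a ha
  calc ‖G x a + H x a‖ ≤ ‖G x a‖ + ‖H x a‖ := norm_add_le _ _
    _ ≤ C * w a ^ N + D * w a ^ M := add_le_add (h a ha x hx) (h' a ha x hx)
    _ ≤ C * w a ^ (max N M) + D * w a ^ (max N M) := by
        gcongr
        · exact le_max_left _ _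
        · exact le_max_right _ _
    _ = _ := by ring

lemma PolyBd.mul {α : Type*} {S : Set α} {w : α → ℝ} (hw : ∀ a ∈ S, 1 ≤ w a) {G H : ℝ → α → ℂ}
    (hG : PolyBd S w G) (hH : PolyBd S w H) : PolyBd S w (fun x a => G x a * H x a) := by
  obtain ⟨C, N, hC, h⟩ := hG
  obtain ⟨D, M, hD, h'⟩ := hH
  refine ⟨C * D, N + M, by positivity, fun a ha x hx => ?_⟩
  have h1 := hw a ha
  calc ‖G x a * H x a‖ = ‖G x a‖ * ‖H x a‖ := norm_mul _ _
    _ ≤ (C * w a ^ N) * (D * w a ^ M) := by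
        have := h a ha x hx
        have := h' a ha x hx
        gcongr
    _ = _ := by ring

lemma PolyBd.of_bounded {α : Type*} {S : Set α} {w : α → ℝ} {G : ℝ → α → ℂ} (C : ℝ)
    (h : ∀ a ∈ S, ∀ x ∈ Icc (0:ℝ) 1, ‖G x a‖ ≤ C) : PolyBd S w G := by
  refine ⟨max C 0, 0, le_max_right _ _, fun a ha x hx => ?_⟩
  simpa using Or.inl (h a ha x hx)

lemma PolyBd.const {α : Type*} {S : Set α} {w : α → ℝ} (c : ℂ) :
    PolyBd S w (fun _ _ => c) := PolyBd.of_bounded ‖c‖ (fun _ _ _ _ => le_rfl)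

structure IsC2 {α : Type*} [MeasurableSpace α] (S : Set α) (w : α → ℝ)
    (G G1 G2 : ℝ → α → ℂ) : Prop where
  d1 : ∀ a ∈ S, ∀ x ∈ Icc (0:ℝ) 1, HasDerivWithinAt (fun x => G x a) (G1 x a) (Icc 0 1) x
  d2 : ∀ a ∈ S, ∀ x ∈ Icc (0:ℝ) 1, HasDerivWithinAt (fun x => G1 x a) (G2 x a) (Icc 0 1) x
  c2 : ∀ a ∈ S, ContinuousOn (fun x => G2 x a) (Icc 0 1)
  m0 : ∀ x, Measurable (G x)
  m1 : ∀ x, Measurable (G1 x)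
  m2 : ∀ x, Measurable (G2 x)
  b0 : PolyBd S w G
  b1 : PolyBd S w G1
  b2 : PolyBd S w G2

variable {α : Type*} [MeasurableSpace α] {S : Set α} {w : α → ℝ}

lemma IsC2.k0 {G G1 G2 : ℝ → α → ℂ} (h : IsC2 S w G G1 G2) :
    ∀ a ∈ S, ContinuousOn (fun x => G x a) (Icc 0 1) :=
  fun a ha x hx => (h.d1 a ha x hx).continuousWithinAt

lemma IsC2.k1 {G G1 G2 : ℝ → α → ℂ} (h : IsC2 S w G G1 G2) :
    ∀ a ∈ S, ContinuousOn (fun x => G1 x a) (Icc 0 1) :=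
  fun a ha x hx => (h.d2 a ha x hx).continuousWithinAt

lemma IsC2.add (hw : ∀ a ∈ S, 1 ≤ w a) {G G1 G2 H H1 H2 : ℝ → α → ℂ}
    (g : IsC2 S w G G1 G2) (h : IsC2 S w H H1 H2) :
    IsC2 S w (fun x a => G x a + H x a) (fun x a => G1 x a + H1 x a)
      (fun x a => G2 x a + H2 x a) where
  d1 a ha x hx := (g.d1 a ha x hx).add (h.d1 a ha x hx)
  d2 a ha x hx := (g.d2 a ha x hx).add (h.d2 a ha x hx)
  c2 a ha := (g.c2 a ha).add (h.c2 a ha)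
  m0 x := (g.m0 x).add (h.m0 x)
  m1 x := (g.m1 x).add (h.m1 x)
  m2 x := (g.m2 x).add (h.m2 x)
  b0 := g.b0.add hw h.b0
  b1 := g.b1.add hw h.b1
  b2 := g.b2.add hw h.b2

lemma IsC2.mul (hw : ∀ a ∈ S, 1 ≤ w a) {G G1 G2 H H1 H2 : ℝ → α → ℂ}
    (g : IsC2 S w G G1 G2) (h : IsC2 S w H H1 H2) :
    IsC2 S w (fun x a => G x a * H x a) (fun x a => G1 x a * H x a + G x a * H1 x a)
      (fun x a => (G2 x a * H x a + G1 x a * H1 x a) + (G1 x a * H1 x a + G x a * H2 x a)) where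
  d1 a ha x hx := (g.d1 a ha x hx).mul (h.d1 a ha x hx)
  d2 a ha x hx := ((g.d2 a ha x hx).mul (h.d1 a ha x hx)).add
    ((g.d1 a ha x hx).mul (h.d2 a ha x hx))
  c2 a ha := (((g.c2 a ha).mul (h.k0 a ha)).add ((g.k1 a ha).mul (h.k1 a ha))).add
    (((g.k1 a ha).mul (h.k1 a ha)).add ((g.k0 a ha).mul (h.c2 a ha)))
  m0 x := (g.m0 x).mul (h.m0 x)
  m1 x := ((g.m1 x).mul (h.m0 x)).add ((g.m0 x).mul (h.m1 x))
  m2 x := (((g.m2 x).mul (h.m0 x)).add ((g.m1 x).mul (h.m1 x))).add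
    (((g.m1 x).mul (h.m1 x)).add ((g.m0 x).mul (h.m2 x)))
  b0 := g.b0.mul hw h.b0
  b1 := (g.b1.mul hw h.b0).add hw (g.b0.mul hw h.b1)
  b2 := ((g.b2.mul hw h.b0).add hw (g.b1.mul hw h.b1)).add hw
    ((g.b1.mul hw h.b1).add hw (g.b0.mul hw h.b2))

lemma IsC2.static {g : α → ℂ} (hg : Measurable g) (hb : PolyBd S w (fun _ a => g a)) :
    IsC2 S w (fun _ a => g a) (fun _ _ => 0) (fun _ _ => 0) where
  d1 a ha x hx := hasDerivWithinAt_const _ _ _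
  d2 a ha x hx := hasDerivWithinAt_const _ _ _
  c2 a ha := continuousOn_const
  m0 x := hg
  m1 x := measurable_const
  m2 x := measurable_const
  b0 := hb
  b1 := PolyBd.const 0
  b2 := PolyBd.const 0

lemma IsC2.const_mul (hw : ∀ a ∈ S, 1 ≤ w a) {G G1 G2 : ℝ → α → ℂ} (c : ℂ)
    (g : IsC2 S w G G1 G2) :
    IsC2 S w (fun x a => c * G x a) (fun x a => c * G1 x a) (fun x a => c * G2 x a) where
  d1 a ha x hx := (g.d1 a ha x hx).const_mul c
  d2 a ha x hx := (g.d2 a ha x hx).const_mul c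
  c2 a ha := continuousOn_const.mul (g.c2 a ha)
  m0 x := (g.m0 x).const_mul c
  m1 x := (g.m1 x).const_mul c
  m2 x := (g.m2 x).const_mul c
  b0 := (PolyBd.const c).mul hw g.b0
  b1 := (PolyBd.const c).mul hw g.b1
  b2 := (PolyBd.const c).mul hw g.b2

lemma IsC2.sub (hw : ∀ a ∈ S, 1 ≤ w a) {G G1 G2 H H1 H2 : ℝ → α → ℂ}
    (g : IsC2 S w G G1 G2) (h : IsC2 S w H H1 H2) :
    IsC2 S w (fun x a => G x a - H x a) (fun x a => G1 x a - H1 x a)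
      (fun x a => G2 x a - H2 x a) := by
  have := g.add hw (h.const_mul hw (-1))
  simpa [sub_eq_add_neg] using this

lemma IsC2.exp (hw : ∀ a ∈ S, 1 ≤ w a) {G G1 G2 : ℝ → α → ℂ}
    (g : IsC2 S w G G1 G2) (C : ℝ)
    (hC : ∀ a ∈ S, ∀ x ∈ Icc (0:ℝ) 1, ‖Complex.exp (G x a)‖ ≤ C) :
    IsC2 S w (fun x a => Complex.exp (G x a)) (fun x a => Complex.exp (G x a) * G1 x a)
      (fun x a => Complex.exp (G x a) * G1 x a * G1 x a + Complex.exp (G x a) * G2 x a) where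
  d1 a ha x hx := (g.d1 a ha x hx).cexp
  d2 a ha x hx := ((g.d1 a ha x hx).cexp).mul (g.d2 a ha x hx)
  c2 a ha := (((g.k0 a ha).cexp.mul (g.k1 a ha)).mul (g.k1 a ha)).add
    ((g.k0 a ha).cexp.mul (g.c2 a ha))
  m0 x := (g.m0 x).cexp
  m1 x := (g.m0 x).cexp.mul (g.m1 x)
  m2 x := (((g.m0 x).cexp.mul (g.m1 x)).mul (g.m1 x)).add ((g.m0 x).cexp.mul (g.m2 x))
  b0 := PolyBd.of_bounded C hC
  b1 := (PolyBd.of_bounded C hC).mul hw g.b1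
  b2 := (((PolyBd.of_bounded C hC).mul hw g.b1).mul hw g.b1).add hw
    ((PolyBd.of_bounded C hC).mul hw g.b2)

lemma IsC2.inv (hw : ∀ a ∈ S, 1 ≤ w a) {G G1 G2 : ℝ → α → ℂ}
    (g : IsC2 S w G G1 G2) (δ : ℝ) (hδ : 0 < δ)
    (hC : ∀ a ∈ S, ∀ x ∈ Icc (0:ℝ) 1, δ ≤ ‖G x a‖) :
    ∃ H1 H2, IsC2 S w (fun x a => (G x a)⁻¹) H1 H2 := by
  have hb : PolyBd S w (fun x a => (G x a)⁻¹) := PolyBd.of_bounded δ⁻¹ (fun a ha x hx => by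
    rw [norm_inv]; exact inv_anti₀ hδ (hC a ha x hx))
  have hne : ∀ a ∈ S, ∀ x ∈ Icc (0:ℝ) 1, G x a ≠ 0 := fun a ha x hx h0 => by
    have := hC a ha x hx
    rw [h0, norm_zero] at this; linarith
  have hd : ∀ a ∈ S, ∀ x ∈ Icc (0:ℝ) 1, HasDerivWithinAt (fun x => (G x a)⁻¹)
      (-1 * (G1 x a * ((G x a)⁻¹ * (G x a)⁻¹))) (Icc 0 1) x := fun a ha x hx => by
    refine ((g.d1 a ha x hx).inv (hne a ha x hx)).congr_deriv ?_
    simp only [div_eq_mul_inv, sq, mul_inv]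
    ring
  have hc : ∀ a ∈ S, ContinuousOn (fun x => (G x a)⁻¹) (Icc 0 1) :=
    fun a ha => (g.k0 a ha).inv₀ (hne a ha)
  have hc' : ∀ a ∈ S, ContinuousOn (fun x => (-1 * (G1 x a * ((G x a)⁻¹ * (G x a)⁻¹)))) (Icc 0 1) :=
    fun a ha => continuousOn_const.mul ((g.k1 a ha).mul ((hc a ha).mul (hc a ha)))
  have hm : ∀ x, Measurable fun a => (-1 * (G1 x a * ((G x a)⁻¹ * (G x a)⁻¹))) := fun x =>
    ((g.m1 x).mul ((g.m0 x).inv.mul (g.m0 x).inv)).const_mul (-1)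
  have hb1 : PolyBd S w (fun x a => (-1 * (G1 x a * ((G x a)⁻¹ * (G x a)⁻¹)))) :=
    (PolyBd.const _).mul hw (g.b1.mul hw (hb.mul hw hb))
  refine ⟨fun x a => -1 * (G1 x a * ((G x a)⁻¹ * (G x a)⁻¹)),
    fun x a => -1 * (G2 x a * ((G x a)⁻¹ * (G x a)⁻¹) + G1 x a *
      ((-1 * (G1 x a * ((G x a)⁻¹ * (G x a)⁻¹))) * (G x a)⁻¹
        + (G x a)⁻¹ * (-1 * (G1 x a * ((G x a)⁻¹ * (G x a)⁻¹))))), ?_⟩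
  exact
  { d1 := hd
    d2 := fun a ha x hx => ((g.d2 a ha x hx).mul
      ((hd a ha x hx).mul (hd a ha x hx))).const_mul (-1)
    c2 := fun a ha => continuousOn_const.mul (((g.c2 a ha).mul ((hc a ha).mul (hc a ha))).add
      ((g.k1 a ha).mul (((hc' a ha).mul (hc a ha)).add ((hc a ha).mul (hc' a ha)))))
    m0 := fun x => (g.m0 x).inv
    m1 := hm
    m2 := fun x => (((g.m2 x).mul ((g.m0 x).inv.mul (g.m0 x).inv)).add ((g.m1 x).mul
      (((hm x).mul (g.m0 x).inv).add ((g.m0 x).inv.mul (hm x))))).const_mul (-1)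
    b0 := hb
    b1 := hb1
    b2 := (PolyBd.const _).mul hw ((g.b2.mul hw (hb.mul hw hb)).add hw (g.b1.mul hw
      ((hb1.mul hw hb).add hw (hb.mul hw hb1)))) }

/-- differentiation under the integral sign, within `[0,1]`. -/
lemma hasDerivWithinAt_integral_Icc {ν : Measure α} {F F1 : ℝ → α → ℂ} {B : α → ℝ}
    (hB : Integrable B ν)
    (hm : ∀ x ∈ Icc (0:ℝ) 1, AEStronglyMeasurable (F x) ν)
    (hd : ∀ᵐ a ∂ν, ∀ x ∈ Icc (0:ℝ) 1,
      HasDerivWithinAt (fun x => F x a) (F1 x a) (Icc 0 1) x)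
    (hb0 : ∀ᵐ a ∂ν, ∀ x ∈ Icc (0:ℝ) 1, ‖F x a‖ ≤ B a)
    (hb1 : ∀ᵐ a ∂ν, ∀ x ∈ Icc (0:ℝ) 1, ‖F1 x a‖ ≤ B a)
    (x : ℝ) (hx : x ∈ Icc (0:ℝ) 1) :
    HasDerivWithinAt (fun x => ∫ a, F x a ∂ν) (∫ a, F1 x a ∂ν) (Icc 0 1) x := by
  have hInteg : ∀ x ∈ Icc (0:ℝ) 1, Integrable (F x) ν := fun x hx =>
    hB.mono' (hm x hx) (hb0.mono fun a ha => ha x hx)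
  rw [hasDerivWithinAt_iff_tendsto_slope]
  have key : Tendsto (fun y => ∫ a, slope (fun x => F x a) x y ∂ν) (𝓝[Icc (0:ℝ) 1 \ {x}] x)
      (𝓝 (∫ a, F1 x a ∂ν)) := by
    refine tendsto_integral_filter_of_dominated_convergence B ?_ ?_ hB ?_
    · filter_upwards [self_mem_nhdsWithin] with y hy
      simp only [slope_def_module]
      exact ((hm y hy.1).sub (hm x hx)).const_smul _
    · filter_upwards [self_mem_nhdsWithin] with y hy
      filter_upwards [hd, hb1] with a ha hb
      have := (convex_Icc (0:ℝ) 1).norm_image_sub_le_of_norm_hasDerivWithin_le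
        (f := fun x => F x a) ha hb hx hy.1
      rw [slope_def_module, norm_smul, norm_inv]
      have hne : 0 < ‖y - x‖ := norm_pos_iff.mpr (sub_ne_zero.mpr hy.2)
      rw [inv_mul_le_iff₀ hne, mul_comm]
      exact this
    · filter_upwards [hd] with a ha
      exact hasDerivWithinAt_iff_tendsto_slope.mp (ha x hx)
  refine key.congr' ?_
  filter_upwards [self_mem_nhdsWithin] with y hy
  simp only [slope_def_module]
  rw [integral_smul, integral_sub (hInteg y hy.1) (hInteg x hx)]

lemma contDiffOn_two_Icc {E E1 E2 : ℝ → ℂ}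
    (h1 : ∀ x ∈ Icc (0:ℝ) 1, HasDerivWithinAt E (E1 x) (Icc 0 1) x)
    (h2 : ∀ x ∈ Icc (0:ℝ) 1, HasDerivWithinAt E1 (E2 x) (Icc 0 1) x)
    (h3 : ContinuousOn E2 (Icc 0 1)) :
    ContDiffOn ℝ 2 E (Icc 0 1) ∧ iteratedDerivWithin 1 E (Icc 0 1) 0 = E1 0 ∧
      iteratedDerivWithin 2 E (Icc 0 1) 0 = E2 0 := by
  have hu : UniqueDiffOn ℝ (Icc (0:ℝ) 1) := uniqueDiffOn_Icc zero_lt_one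
  have e1 : ∀ x ∈ Icc (0:ℝ) 1, derivWithin E (Icc 0 1) x = E1 x :=
    fun x hx => (h1 x hx).derivWithin (hu x hx)
  have e2 : ∀ x ∈ Icc (0:ℝ) 1, derivWithin E1 (Icc 0 1) x = E2 x :=
    fun x hx => (h2 x hx).derivWithin (hu x hx)
  have c1 : ContDiffOn ℝ 1 E1 (Icc 0 1) := by
    have : (1 : WithTop ℕ∞) = 0 + 1 := by norm_num
    rw [this, contDiffOn_succ_iff_derivWithin hu]
    refine ⟨fun x hx => (h2 x hx).differentiableWithinAt, by simp, ?_⟩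
    rw [contDiffOn_zero]
    exact h3.congr e2
  have h0 : (0:ℝ) ∈ Icc (0:ℝ) 1 := by simp
  refine ⟨?_, ?_, ?_⟩
  · have : (2 : WithTop ℕ∞) = 1 + 1 := by norm_num
    rw [this, contDiffOn_succ_iff_derivWithin hu]
    exact ⟨fun x hx => (h1 x hx).differentiableWithinAt, by simp, c1.congr e1⟩
  · rw [iteratedDerivWithin_one]; exact e1 0 h0
  · rw [iteratedDerivWithin_succ]
    rw [← e2 0 h0]
    refine derivWithin_congr (fun x hx => ?_) ?_
    · rw [iteratedDerivWithin_one]; exact e1 x hx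
    · rw [iteratedDerivWithin_one]; exact e1 0 h0

end C2families


section LK

lemma lk_moment (K : Measure ℝ) (a b : ℝ)
    (hKmin : ∫⁻ x : ℝ, ENNReal.ofReal (min 1 (x ^ 2)) ∂K ≠ ⊤)
    (hKexp : ∀ s ∈ Set.Ioo a b,
      ∫⁻ x in {x : ℝ | 1 ≤ |x|}, ENNReal.ofReal (Real.exp (s * x)) ∂K ≠ ⊤)
    (ρ : ℝ) (hρ : ρ ∈ Set.Ioo a b) (n : ℕ) (hn : 2 ≤ n) :
    Integrable (fun x : ℝ => |x| ^ n * Real.exp (ρ * x)) K := by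
  have hmin : Integrable (fun x : ℝ => min 1 (x ^ 2)) K := by
    refine (lintegral_ofReal_ne_top_iff_integrable ?_ ?_).mp hKmin
    · exact (by fun_prop : Measurable fun x : ℝ => min 1 (x^2)).aestronglyMeasurable
    · exact Filter.Eventually.of_forall fun x => by positivity
  have hexp : ∀ s ∈ Set.Ioo a b, IntegrableOn (fun x : ℝ => Real.exp (s * x)) {x : ℝ | 1 ≤ |x|} K := by
    intro s hs
    refine (lintegral_ofReal_ne_top_iff_integrable ?_ ?_).mp (hKexp s hs)
    · exact (by fun_prop : Measurable fun x : ℝ => Real.exp (s * x)).aestronglyMeasurable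
    · exact Filter.Eventually.of_forall fun x => by positivity
  have hmeas : Measurable (fun x : ℝ => |x| ^ n * Real.exp (ρ * x)) := by fun_prop
  have hA : MeasurableSet {x : ℝ | 1 ≤ |x|} := measurableSet_le measurable_const (by fun_prop)
  obtain ⟨δ, hδ, h1, h2⟩ : ∃ δ > 0, ρ + δ ∈ Set.Ioo a b ∧ ρ - δ ∈ Set.Ioo a b := by
    refine ⟨min (b - ρ) (ρ - a) / 2, ?_, ?_, ?_⟩
    · have := hρ.1; have := hρ.2
      have : 0 < min (b - ρ) (ρ - a) := lt_min (by linarith) (by linarith)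
      positivity
    · have := hρ.1; have := hρ.2
      have := min_le_left (b - ρ) (ρ - a)
      have : 0 < min (b - ρ) (ρ - a) := lt_min (by linarith) (by linarith)
      constructor <;> linarith
    · have := hρ.1; have := hρ.2
      have := min_le_right (b - ρ) (ρ - a)
      have : 0 < min (b - ρ) (ρ - a) := lt_min (by linarith) (by linarith)
      constructor <;> linarith
  rw [← integrableOn_univ, ← Set.union_compl_self {x : ℝ | 1 ≤ |x|}]
  refine IntegrableOn.union ?_ ?_
  · refine Integrable.mono' (((hexp _ h1).add (hexp _ h2)).const_mul (n.factorial / δ ^ n))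
      hmeas.aestronglyMeasurable (Filter.Eventually.of_forall fun x => ?_)
    rw [Real.norm_of_nonneg (by positivity)]
    have e1 := Real.pow_div_factorial_le_exp (δ * |x|) (by positivity) n
    have e2 : Real.exp (δ * |x|) ≤ Real.exp (δ * x) + Real.exp (-(δ * x)) := by
      rcases abs_cases x with ⟨h, _⟩ | ⟨h, _⟩ <;> rw [h]
      · have := Real.exp_pos (-(δ * x)); linarith
      · rw [mul_neg]; have := Real.exp_pos ((δ * x)); linarith
    have e3 : |x| ^ n ≤ n.factorial / δ ^ n * (Real.exp (δ * x) + Real.exp (-(δ * x))) := by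
      have : (δ * |x|) ^ n / n.factorial ≤ Real.exp (δ * x) + Real.exp (-(δ * x)) := e1.trans e2
      rw [div_le_iff₀ (by positivity), mul_pow] at this
      rw [div_mul_eq_mul_div, le_div_iff₀ (by positivity)]
      linarith
    calc |x| ^ n * Real.exp (ρ * x) ≤ (n.factorial / δ ^ n * (Real.exp (δ * x) + Real.exp (-(δ * x)))) * Real.exp (ρ * x) := by gcongr
      _ = n.factorial / δ ^ n * (Real.exp (ρ * x) * Real.exp (δ * x) + Real.exp (ρ * x) * Real.exp (-(δ * x))) := by ring
      _ = _ := by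
        simp only [← Real.exp_add, Pi.add_apply]
        congr 3 <;> ring_nf
  · refine Integrable.mono' ((hmin.const_mul (Real.exp |ρ|)).integrableOn)
      hmeas.aestronglyMeasurable ?_
    filter_upwards [ae_restrict_mem hA.compl] with x hx
    simp only [mem_compl_iff, mem_ofPred_eq, not_le] at hx
    rw [Real.norm_of_nonneg (by positivity)]
    have hx2 : x ^ 2 ≤ 1 := by rw [← sq_abs]; exact pow_le_one₀ (abs_nonneg _) hx.le
    rw [min_eq_right hx2, mul_comm]
    have e1 : |x| ^ n ≤ x ^ 2 := by
      rw [← sq_abs]; exact pow_le_pow_of_le_one (abs_nonneg _) hx.le hn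
    have e2 : ρ * x ≤ |ρ| := by
      calc ρ * x ≤ |ρ * x| := le_abs_self _
        _ = |ρ| * |x| := abs_mul _ _
        _ ≤ |ρ| * 1 := by gcongr
        _ = _ := mul_one _
    gcongr

lemma lk_sfinite (K : Measure ℝ) (hK0 : K {0} = 0)
    (hKmin : ∫⁻ x : ℝ, ENNReal.ofReal (min 1 (x ^ 2)) ∂K ≠ ⊤) : SFinite K := by
  set g : ℝ → ENNReal := fun x => ENNReal.ofReal (min 1 (x ^ 2)) with hg
  have hgm : Measurable g := by fun_prop
  have : IsFiniteMeasure (K.withDensity g) := isFiniteMeasure_withDensity hKmin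
  have h1 : (K.withDensity g).withDensity (fun x => (g x)⁻¹) = K := by
    refine withDensity_inv_same hgm ?_ ?_
    · have : ∀ᵐ x ∂K, x ≠ 0 := by
        rw [ae_iff]; simpa using hK0
      filter_upwards [this] with x hx
      simp only [hg, ne_eq, ENNReal.ofReal_eq_zero, not_le]
      have : 0 < x ^ 2 := by positivity
      positivity
    · exact Filter.Eventually.of_forall fun x => ENNReal.ofReal_ne_top
  rw [← h1]
  infer_instance

/-- integrand of the moment representation -/
noncomputable def kapI (j : ℕ) (lam : ℝ) (z : ℂ) (p : ℝ × ℝ) : ℂ :=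
  ((p.1 ^ 2 * (1 - p.2) * (p.2 * p.1) ^ j : ℝ) : ℂ) *
    Complex.exp ((lam : ℂ) * ((p.2 * p.1 : ℝ) * z))

noncomputable def kapM (K : Measure ℝ) : Measure (ℝ × ℝ) := K.prod (volume.restrict (Ioc (0:ℝ) 1))

noncomputable def kap (K : Measure ℝ) (j : ℕ) (lam : ℝ) (z : ℂ) : ℂ :=
  z ^ (2 + j) * ∫ p, kapI j lam z p ∂(kapM K)

lemma kapI_measurable (j : ℕ) (lam : ℝ) (z : ℂ) : Measurable (kapI j lam z) := by
  unfold kapI; fun_prop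

lemma kap_measurable (K : Measure ℝ) [SFinite K] (j : ℕ) (lam : ℝ) :
    Measurable (fun z => kap K j lam z) := by
  unfold kap kapM
  refine Measurable.mul (by fun_prop) ?_
  have : StronglyMeasurable (fun q : ℂ × (ℝ × ℝ) => kapI j lam q.1 q.2) := by
    refine Measurable.stronglyMeasurable ?_
    unfold kapI; fun_prop
  exact (this.integral_prod_right).measurable

lemma kapM_ae (K : Measure ℝ) [SFinite K] : ∀ᵐ p ∂(kapM K), p.2 ∈ Ioc (0:ℝ) 1 := by
  unfold kapM
  have : ∀ᵐ y ∂(volume.restrict (Ioc (0:ℝ) 1)), y ∈ Ioc (0:ℝ) 1 := ae_restrict_mem measurableSet_Ioc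
  exact Measure.quasiMeasurePreserving_snd.ae this

lemma kapI_bound (j : ℕ) (lam : ℝ) (hl : lam ∈ Icc (0:ℝ) 1) (z : ℂ) (p : ℝ × ℝ)
    (hp : p.2 ∈ Ioc (0:ℝ) 1) :
    ‖kapI j lam z p‖ ≤ |p.1| ^ (2 + j) * (1 + Real.exp (z.re * p.1)) := by
  obtain ⟨x, s⟩ := p
  simp only at hp ⊢
  unfold kapI
  rw [norm_mul, Complex.norm_exp, Complex.norm_real]
  simp only [norm_mul, norm_pow, Real.norm_eq_abs]
  have h1 : |1 - s| ≤ 1 := by rw [abs_le]; constructor <;> linarith [hp.1, hp.2]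
  have h2 : |s| ≤ 1 := by rw [abs_le]; constructor <;> linarith [hp.1, hp.2]
  have h3 : ((lam : ℂ) * (((s * x : ℝ) : ℂ) * z)).re = (lam * s) * (z.re * x) := by
    simp; ring
  rw [h3]
  have h4 : Real.exp ((lam * s) * (z.re * x)) ≤ 1 + Real.exp (z.re * x) := by
    have ls0 : 0 ≤ lam * s := mul_nonneg hl.1 hp.1.le
    have ls1 : lam * s ≤ 1 := mul_le_one₀ hl.2 hp.1.le hp.2
    rcases le_total 0 (z.re * x) with h | h
    · have : Real.exp ((lam * s) * (z.re * x)) ≤ Real.exp (z.re * x) :=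
        Real.exp_le_exp.mpr (mul_le_of_le_one_left h ls1)
      linarith
    · have : Real.exp ((lam * s) * (z.re * x)) ≤ 1 :=
        Real.exp_le_one_iff.mpr (mul_nonpos_of_nonneg_of_nonpos ls0 h)
      linarith [Real.exp_pos (z.re * x)]
  have h5 : |x| ^ 2 * |1 - s| * (|s| * |x|) ^ j ≤ |x| ^ (2 + j) := by
    calc |x| ^ 2 * |1 - s| * (|s| * |x|) ^ j ≤ |x| ^ 2 * 1 * (1 * |x|) ^ j := by gcongr
      _ = _ := by ring
  gcongr

variable {K : Measure ℝ} {a b : ℝ}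

lemma kap_dom [SFinite K] (h0 : (0:ℝ) ∈ Ioo a b)
    (hmom : ∀ ρ ∈ Ioo a b, ∀ n : ℕ, 2 ≤ n → Integrable (fun x : ℝ => |x| ^ n * Real.exp (ρ * x)) K)
    (ρ : ℝ) (hρ : ρ ∈ Ioo a b) (n : ℕ) (hn : 2 ≤ n) :
    Integrable (fun p : ℝ × ℝ => |p.1| ^ n * (1 + Real.exp (ρ * p.1))) (kapM K) := by
  have h1 : Integrable (fun x : ℝ => |x| ^ n * (1 + Real.exp (ρ * x))) K := by
    have := (hmom 0 h0 n hn).add (hmom ρ hρ n hn)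
    refine this.congr (Filter.Eventually.of_forall fun x => ?_)
    simp; ring
  exact h1.comp_fst _

lemma kapI_integrable [SFinite K] (h0 : (0:ℝ) ∈ Ioo a b)
    (hmom : ∀ ρ ∈ Ioo a b, ∀ n : ℕ, 2 ≤ n → Integrable (fun x : ℝ => |x| ^ n * Real.exp (ρ * x)) K)
    (j : ℕ) (lam : ℝ) (hl : lam ∈ Icc (0:ℝ) 1) (z : ℂ) (hz : z.re ∈ Ioo a b) :
    Integrable (kapI j lam z) (kapM K) := by
  refine (kap_dom h0 hmom z.re hz (2 + j) (by lia)).mono'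
    (kapI_measurable j lam z).aestronglyMeasurable ?_
  filter_upwards [kapM_ae K] with p hp using kapI_bound j lam hl z p hp

lemma kap_bound [SFinite K] (h0 : (0:ℝ) ∈ Ioo a b)
    (hmom : ∀ ρ ∈ Ioo a b, ∀ n : ℕ, 2 ≤ n → Integrable (fun x : ℝ => |x| ^ n * Real.exp (ρ * x)) K)
    (j : ℕ) (ρ : ℝ) (hρ : ρ ∈ Ioo a b) :
    ∃ C : ℝ, 0 ≤ C ∧ ∀ lam ∈ Icc (0:ℝ) 1, ∀ z : ℂ, z.re = ρ → ‖kap K j lam z‖ ≤ C * ‖z‖ ^ (2 + j) := by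
  refine ⟨∫ p, |p.1| ^ (2 + j) * (1 + Real.exp (ρ * p.1)) ∂(kapM K),
    integral_nonneg fun p => by positivity, fun lam hl z hz => ?_⟩
  unfold kap
  rw [norm_mul, norm_pow, mul_comm]
  gcongr
  refine norm_integral_le_of_norm_le (kap_dom h0 hmom ρ hρ (2 + j) (by lia)) ?_
  filter_upwards [kapM_ae K] with p hp
  rw [← hz]
  exact kapI_bound j lam hl z p hp

lemma kap_deriv [SFinite K] (h0 : (0:ℝ) ∈ Ioo a b)
    (hmom : ∀ ρ ∈ Ioo a b, ∀ n : ℕ, 2 ≤ n → Integrable (fun x : ℝ => |x| ^ n * Real.exp (ρ * x)) K)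
    (j : ℕ) (z : ℂ) (hz : z.re ∈ Ioo a b) (lam : ℝ) (hl : lam ∈ Icc (0:ℝ) 1) :
    HasDerivWithinAt (fun lam => kap K j lam z) (kap K (j + 1) lam z) (Icc 0 1) lam := by
  have hB := (kap_dom h0 hmom z.re hz (2 + j) (by lia)).add
    ((kap_dom h0 hmom z.re hz (2 + (j + 1)) (by lia)).const_mul ‖z‖)
  have key := hasDerivWithinAt_integral_Icc (ν := kapM K) (F := fun lam p => kapI j lam z p)
    (F1 := fun lam p => z * kapI (j + 1) lam z p) hB
    (fun x hx => (kapI_measurable j x z).aestronglyMeasurable)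
    (Filter.Eventually.of_forall fun p x hx => ?_) ?_ ?_ lam hl
  · have := key.const_mul (z ^ (2 + j))
    unfold kap
    refine this.congr_deriv ?_
    rw [integral_const_mul]; ring
  · unfold kapI
    have h1 : HasDerivAt (fun lam : ℝ => (lam : ℂ) * (((p.2 * p.1 : ℝ) : ℂ) * z))
        (1 * (((p.2 * p.1 : ℝ) : ℂ) * z)) x := (Complex.ofRealCLM.hasDerivAt (x := x)).mul_const _
    have h2 := (h1.cexp.const_mul ((p.1 ^ 2 * (1 - p.2) * (p.2 * p.1) ^ j : ℝ) : ℂ)).hasDerivWithinAt (s := Icc 0 1)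
    refine h2.congr_deriv ?_
    push_cast; ring
  · filter_upwards [kapM_ae K] with p hp x hx
    have := kapI_bound j x hx z p hp
    simp only [Pi.add_apply]
    have h2 : 0 ≤ ‖z‖ * (|p.1| ^ (2 + (j + 1)) * (1 + Real.exp (z.re * p.1))) := by positivity
    linarith
  · filter_upwards [kapM_ae K] with p hp x hx
    have := kapI_bound (j + 1) x hx z p hp
    simp only [Pi.add_apply]
    have h2 : 0 ≤ (|p.1| ^ (2 + j) * (1 + Real.exp (z.re * p.1))) := by positivity
    rw [norm_mul]
    have := mul_le_mul_of_nonneg_left this (norm_nonneg z)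
    linarith

lemma kap_zero [SFinite K] (j : ℕ) (z : ℂ) :
    kap K j 0 z = z ^ (2 + j) * (((∫ x : ℝ, x ^ (2 + j) ∂K) : ℝ) *
      ((∫ s in (0:ℝ)..1, (1 - s) * s ^ j : ℝ) : ℂ)) := by
  unfold kap kapM
  congr 1
  have : ∀ p : ℝ × ℝ, kapI j 0 z p = (((p.1 ^ (2 + j)) * ((1 - p.2) * p.2 ^ j) : ℝ) : ℂ) := by
    intro p; unfold kapI; push_cast; simp; ring
  simp only [this]
  rw [integral_complex_ofReal, integral_prod_mul (fun x : ℝ => x ^ (2 + j)) (fun s : ℝ => (1 - s) * s ^ j),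
    intervalIntegral.integral_of_le zero_le_one]
  push_cast
  rfl

lemma kap_coef (j : ℕ) : (∫ s in (0:ℝ)..1, (1 - s) * s ^ j) = 1 / (j + 1) - 1 / (j + 2) := by
  have : ∀ s : ℝ, (1 - s) * s ^ j = s ^ j - s ^ (j + 1) := fun s => by ring
  simp only [this]
  rw [intervalIntegral.integral_sub (by simp) (by simp), integral_pow, integral_pow]
  simp
  ring

lemma exp_taylor (w : ℂ) :
    w ^ 2 * ∫ s in (0:ℝ)..1, ((1 - s : ℝ) : ℂ) * Complex.exp (s * w) = Complex.exp w - 1 - w := by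
  rw [← intervalIntegral.integral_const_mul]
  have hd : ∀ s ∈ uIcc (0:ℝ) 1, HasDerivAt (fun s : ℝ => ((1 - s : ℝ) : ℂ) * w * Complex.exp (s * w)
      + Complex.exp (s * w)) (w ^ 2 * (((1 - s : ℝ) : ℂ) * Complex.exp (s * w))) s := by
    intro s _
    have h1 : HasDerivAt (fun s : ℝ => (s : ℂ)) 1 s := Complex.ofRealCLM.hasDerivAt
    have h2 := (h1.mul_const w).cexp
    have h3 : HasDerivAt (fun s : ℝ => ((1 - s : ℝ) : ℂ)) (-1) s := by
      push_cast
      simpa using h1.const_sub 1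
    have h4 := ((h3.mul_const w).mul h2).add h2
    refine h4.congr_deriv ?_
    ring
  rw [intervalIntegral.integral_eq_sub_of_hasDerivAt hd]
  · simp; ring
  · apply Continuous.intervalIntegrable
    fun_prop

lemma kappa_eq_kap [SFinite K] (h0 : (0:ℝ) ∈ Ioo a b)
    (hmom : ∀ ρ ∈ Ioo a b, ∀ n : ℕ, 2 ≤ n → Integrable (fun x : ℝ => |x| ^ n * Real.exp (ρ * x)) K)
    (μ c : ℝ) (lam : ℝ) (hl : lam ∈ Icc (0:ℝ) 1) (z : ℂ) (hz : z.re ∈ Ioo a b) :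
    kappa μ c K lam z = (μ : ℂ) * z + (c : ℂ) / 2 * z ^ 2 + kap K 0 lam z := by
  unfold kappa
  split_ifs with h
  · subst h
    rw [kap_zero]
    rw [kap_coef]
    push_cast
    norm_num
    ring
  · congr 1
    unfold kap kapM
    rw [integral_prod _ (kapI_integrable h0 hmom 0 lam hl z hz), ← integral_const_mul, ← integral_const_mul]
    congr 1
    ext x
    have hl0 : (lam : ℂ) ≠ 0 := by exact_mod_cast h
    rw [← exp_taylor, intervalIntegral.integral_of_le zero_le_one]
    have : ∀ s : ℝ, kapI 0 lam z (x, s) = (x:ℂ) ^ 2 * (((1 - s : ℝ) : ℂ) * Complex.exp (s * (lam * z * x))) := by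
      intro s; unfold kapI; push_cast; ring_nf
    simp only [this]
    rw [integral_const_mul]
    field_simp
    simp only [add_zero]
    ring

lemma h_integrable [SFinite K] (h0 : (0:ℝ) ∈ Ioo a b)
    (hmom : ∀ ρ ∈ Ioo a b, ∀ n : ℕ, 2 ≤ n → Integrable (fun x : ℝ => |x| ^ n * Real.exp (ρ * x)) K)
    (lam : ℝ) (hl : lam ∈ Icc (0:ℝ) 1) (z : ℂ) (hz : z.re ∈ Ioo a b) :
    Integrable (fun x : ℝ => Complex.exp ((lam : ℂ) * z * (x : ℂ)) - 1 - (lam : ℂ) * z * (x : ℂ)) K := by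
  have h1 := (kapI_integrable h0 hmom 0 lam hl z hz).integral_prod_left
  have h2 := h1.const_mul ((lam : ℂ) ^ 2 * z ^ 2)
  refine h2.congr (Filter.Eventually.of_forall fun x => ?_)
  simp only
  rw [← exp_taylor, intervalIntegral.integral_of_le zero_le_one]
  have : ∀ s : ℝ, kapI 0 lam z (x, s) = (x:ℂ) ^ 2 * (((1 - s : ℝ) : ℂ) * Complex.exp (s * (lam * z * x))) := by
    intro s; unfold kapI; push_cast; ring_nf
  simp only [this]
  rw [integral_const_mul]
  ring

end LK


section ReBounds
variable {K : Measure ℝ} {a b : ℝ}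

noncomputable def hRe (lam : ℝ) (z : ℂ) (x : ℝ) : ℝ :=
  Real.exp (lam * z.re * x) * Real.cos (lam * z.im * x) - 1 - lam * z.re * x

lemma hRe_eq (lam : ℝ) (z : ℂ) (x : ℝ) :
    (Complex.exp ((lam : ℂ) * z * (x : ℂ)) - 1 - (lam : ℂ) * z * (x : ℂ)).re = hRe lam z x := by
  simp [hRe, Complex.exp_re]

lemma hRe_integrable [SFinite K] (h0 : (0:ℝ) ∈ Ioo a b)
    (hmom : ∀ ρ ∈ Ioo a b, ∀ n : ℕ, 2 ≤ n → Integrable (fun x : ℝ => |x| ^ n * Real.exp (ρ * x)) K)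
    (lam : ℝ) (hl : lam ∈ Icc (0:ℝ) 1) (z : ℂ) (hz : z.re ∈ Ioo a b) :
    Integrable (hRe lam z) K := by
  have := (h_integrable h0 hmom lam hl z hz).re
  refine this.congr (Filter.Eventually.of_forall fun x => ?_)
  exact hRe_eq lam z x

lemma kappa_re [SFinite K] (h0 : (0:ℝ) ∈ Ioo a b)
    (hmom : ∀ ρ ∈ Ioo a b, ∀ n : ℕ, 2 ≤ n → Integrable (fun x : ℝ => |x| ^ n * Real.exp (ρ * x)) K)
    (μ c : ℝ) (lam : ℝ) (hl : lam ∈ Icc (0:ℝ) 1) (hl0 : lam ≠ 0) (z : ℂ) (hz : z.re ∈ Ioo a b) :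
    (kappa μ c K lam z).re = μ * z.re + c / 2 * (z.re ^ 2 - z.im ^ 2)
      + (lam ^ 2)⁻¹ * ∫ x, hRe lam z x ∂K := by
  unfold kappa
  rw [if_neg hl0]
  have h1 : (∫ x : ℝ, (Complex.exp ((lam : ℂ) * z * (x : ℂ)) - 1 - (lam : ℂ) * z * (x : ℂ)) ∂K).re
      = ∫ x, hRe lam z x ∂K := by
    have := Complex.reCLM.integral_comp_comm (h_integrable h0 hmom lam hl z hz)
    simp only [Complex.reCLM_apply, hRe_eq] at this
    exact this.symm
  have h2 : (((lam : ℂ) ^ 2)⁻¹) = (((lam ^ 2)⁻¹ : ℝ) : ℂ) := by push_cast; rfl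
  have h3 : ((c : ℂ) / 2) = ((c / 2 : ℝ) : ℂ) := by push_cast; rfl
  rw [h2, h3, Complex.add_re, Complex.add_re, Complex.re_ofReal_mul, Complex.re_ofReal_mul,
    Complex.re_ofReal_mul, h1]
  congr 3
  simp [sq]

lemma kappa_re_zero (μ c : ℝ) (z : ℂ) :
    (kappa μ c K 0 z).re = μ * z.re + (c + ∫ x, x ^ 2 ∂K) / 2 * (z.re ^ 2 - z.im ^ 2) := by
  unfold kappa
  rw [if_pos rfl]
  have h3 : (((c + ∫ x : ℝ, x ^ 2 ∂K : ℝ) : ℂ) / 2) = (((c + ∫ x : ℝ, x ^ 2 ∂K) / 2 : ℝ) : ℂ) := by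
    push_cast; rfl
  rw [h3, Complex.add_re, Complex.re_ofReal_mul, Complex.re_ofReal_mul]
  congr 2
  simp [sq]

lemma kappa_real (μ c lam r : ℝ) : ∃ k : ℝ, kappa μ c K lam (r : ℂ) = (k : ℂ) := by
  unfold kappa
  split_ifs with h
  · exact ⟨μ * r + (c + ∫ x : ℝ, x ^ 2 ∂K) / 2 * r ^ 2, by push_cast; rfl⟩
  · refine ⟨μ * r + c / 2 * r ^ 2 + (lam ^ 2)⁻¹ * ∫ x : ℝ, (Real.exp (lam * r * x) - 1 - lam * r * x) ∂K, ?_⟩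
    push_cast
    rw [← integral_complex_ofReal]
    push_cast
    rfl

lemma kappa_re_le [SFinite K] (h0 : (0:ℝ) ∈ Ioo a b)
    (hmom : ∀ ρ ∈ Ioo a b, ∀ n : ℕ, 2 ≤ n → Integrable (fun x : ℝ => |x| ^ n * Real.exp (ρ * x)) K)
    (μ c : ℝ) (hc : 0 ≤ c) (lam : ℝ) (hl : lam ∈ Icc (0:ℝ) 1) (z : ℂ) (hz : z.re ∈ Ioo a b) :
    (kappa μ c K lam z).re ≤ (kappa μ c K lam (z.re : ℂ)).re := by
  by_cases hl0 : lam = 0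
  · subst hl0
    rw [kappa_re_zero, kappa_re_zero]
    have hs : 0 ≤ c + ∫ x, x ^ 2 ∂K := add_nonneg hc (integral_nonneg fun x => sq_nonneg x)
    simp only [Complex.ofReal_re, Complex.ofReal_im]
    have : 0 ≤ (c + ∫ x, x ^ 2 ∂K) * z.im ^ 2 := mul_nonneg hs (sq_nonneg _)
    nlinarith
  · rw [kappa_re h0 hmom μ c lam hl hl0 z hz, kappa_re h0 hmom μ c lam hl hl0 (z.re : ℂ) (by simpa using hz)]
    have h1 : ∫ x, hRe lam z x ∂K ≤ ∫ x, hRe lam (z.re : ℂ) x ∂K := by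
      refine integral_mono (hRe_integrable h0 hmom lam hl z hz)
        (hRe_integrable h0 hmom lam hl _ (by simpa using hz)) fun x => ?_
      simp only [hRe, Complex.ofReal_re, Complex.ofReal_im, mul_zero, zero_mul, Real.cos_zero, mul_one]
      have := mul_le_mul_of_nonneg_left (Real.cos_le_one (lam * z.im * x)) (Real.exp_pos (lam * z.re * x)).le
      linarith
    have h2 : (lam ^ 2)⁻¹ * ∫ x, hRe lam z x ∂K ≤ (lam ^ 2)⁻¹ * ∫ x, hRe lam (z.re : ℂ) x ∂K := by
      gcongr
    simp only [Complex.ofReal_re, Complex.ofReal_im]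
    have : 0 ≤ c * z.im ^ 2 := mul_nonneg hc (sq_nonneg _)
    nlinarith

lemma kbar_quad [SFinite K] (h0 : (0:ℝ) ∈ Ioo a b) (h2 : (2:ℝ) ∈ Ioo a b)
    (hmom : ∀ ρ ∈ Ioo a b, ∀ n : ℕ, 2 ≤ n → Integrable (fun x : ℝ => |x| ^ n * Real.exp (ρ * x)) K)
    (μ c : ℝ) (hc : 0 ≤ c) (lam : ℝ) (hl : lam ∈ Icc (0:ℝ) 1) (z : ℂ) (h2R : 2 * z.re ∈ Ioo a b)
    (ξ : ℝ) :
    0 ≤ (kappa μ c K lam ((2 * z.re : ℝ) : ℂ)).re - 2 * (kappa μ c K lam z).re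
      + 2 * ξ * (kbar μ c K lam z 1).re + ξ ^ 2 * (kbar μ c K lam 1 1).re := by
  unfold kbar
  simp only [Complex.sub_re]
  by_cases hl0 : lam = 0
  · subst hl0
    simp only [kappa_re_zero]
    have hs : 0 ≤ c + ∫ x, x ^ 2 ∂K := add_nonneg hc (integral_nonneg fun x => sq_nonneg x)
    simp only [Complex.ofReal_re, Complex.ofReal_im, Complex.add_re, Complex.add_im, Complex.one_re, Complex.one_im]
    have : 0 ≤ (c + ∫ x, x ^ 2 ∂K) * ((z.re + ξ) ^ 2 + z.im ^ 2) := by positivity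
    nlinarith
  · have hz : z.re ∈ Ioo a b := ⟨by linarith [h0.1, h2R.1], by linarith [h0.2, h2R.2]⟩
    have i1 : (1 : ℂ).re ∈ Ioo a b := by
      simp only [Complex.one_re]; exact ⟨by linarith [h0.1, h2.1], by linarith [h0.2, h2.2]⟩
    have i2 : (1 + 1 : ℂ).re ∈ Ioo a b := by
      simp only [Complex.add_re, Complex.one_re]; norm_num; exact h2
    have i3 : (z + 1 : ℂ).re ∈ Ioo a b := by
      simp only [Complex.add_re, Complex.one_re]
      exact ⟨by linarith [h2R.1, h2.1], by linarith [h2R.2, h2.2]⟩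
    have i4 : (((2 * z.re : ℝ) : ℂ)).re ∈ Ioo a b := by rw [Complex.ofReal_re]; exact h2R
    rw [kappa_re h0 hmom μ c lam hl hl0 _ hz, kappa_re h0 hmom μ c lam hl hl0 _ i1,
      kappa_re h0 hmom μ c lam hl hl0 _ i2, kappa_re h0 hmom μ c lam hl hl0 _ i3,
      kappa_re h0 hmom μ c lam hl hl0 _ i4]
    have j0 := hRe_integrable h0 hmom lam hl _ hz
    have j1 := hRe_integrable h0 hmom lam hl _ i1
    have j2 := hRe_integrable h0 hmom lam hl _ i2
    have j3 := hRe_integrable h0 hmom lam hl _ i3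
    have j4 := hRe_integrable h0 hmom lam hl _ i4
    have hI : 0 ≤ ∫ x, (hRe lam ((2 * z.re : ℝ) : ℂ) x - 2 * hRe lam z x
        + (2 * ξ) * (hRe lam (z + 1) x - hRe lam z x - hRe lam 1 x)
        + ξ ^ 2 * (hRe lam (1 + 1) x - hRe lam 1 x - hRe lam 1 x)) ∂K := by
      refine integral_nonneg fun x => ?_
      simp only [hRe, Complex.ofReal_re, Complex.ofReal_im, Complex.add_re, Complex.add_im, Complex.one_re, Complex.one_im,
        mul_zero, zero_mul, Real.cos_zero, mul_one, add_zero, Pi.zero_apply]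
      have e1 : Real.exp (lam * (2 * z.re) * x) = Real.exp (lam * z.re * x) ^ 2 := by
        rw [← Real.exp_nat_mul]; congr 1; push_cast; ring
      have e2 : Real.exp (lam * (z.re + 1) * x) = Real.exp (lam * z.re * x) * Real.exp (lam * x) := by
        rw [← Real.exp_add]; congr 1; ring
      have e3 : Real.exp (lam * (1 + 1) * x) = Real.exp (lam * x) ^ 2 := by
        rw [← Real.exp_nat_mul]; congr 1; push_cast; ring
      rw [e1, e2, e3]
      set A := Real.exp (lam * z.re * x)
      set B := Real.exp (lam * x)
      have hC := Real.cos_sq_le_one (lam * z.im * x)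
      set C := Real.cos (lam * z.im * x)
      have : 0 ≤ (A * C - 1 + ξ * (B - 1)) ^ 2 + A ^ 2 * (1 - C ^ 2) :=
        add_nonneg (sq_nonneg _) (mul_nonneg (sq_nonneg _) (by linarith))
      nlinarith
    rw [integral_add, integral_add, integral_sub, integral_const_mul, integral_const_mul,
      integral_const_mul, integral_sub, integral_sub, integral_sub, integral_sub] at hI
    · simp only [Complex.ofReal_re, Complex.ofReal_im, Complex.add_re, Complex.add_im, Complex.one_re, Complex.one_im]
      have h3 : 0 ≤ c * ((z.re + ξ) ^ 2 + z.im ^ 2) := by positivity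
      have h4 := mul_nonneg (by positivity : 0 ≤ (lam ^ 2)⁻¹) hI
      nlinarith
    all_goals fun_prop

lemma kbar11_pos [SFinite K] (h0 : (0:ℝ) ∈ Ioo a b) (h2 : (2:ℝ) ∈ Ioo a b)
    (hmom : ∀ ρ ∈ Ioo a b, ∀ n : ℕ, 2 ≤ n → Integrable (fun x : ℝ => |x| ^ n * Real.exp (ρ * x)) K)
    (μ c : ℝ) (hc : 0 ≤ c) (hs : 0 < c + ∫ x, x ^ 2 ∂K) (lam : ℝ) (hl : lam ∈ Icc (0:ℝ) 1) :
    0 < (kbar μ c K lam 1 1).re := by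
  unfold kbar
  simp only [Complex.sub_re]
  by_cases hl0 : lam = 0
  · subst hl0
    simp only [kappa_re_zero, Complex.add_re, Complex.add_im, Complex.one_re, Complex.one_im]
    nlinarith
  · have i1 : (1 : ℂ).re ∈ Ioo a b := by
      simp only [Complex.one_re]; exact ⟨by linarith [h0.1, h2.1], by linarith [h0.2, h2.2]⟩
    have i2 : (1 + 1 : ℂ).re ∈ Ioo a b := by
      simp only [Complex.add_re, Complex.one_re]; norm_num; exact h2
    rw [kappa_re h0 hmom μ c lam hl hl0 _ i1, kappa_re h0 hmom μ c lam hl hl0 _ i2]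
    have j1 := hRe_integrable h0 hmom lam hl _ i1
    have j2 := hRe_integrable h0 hmom lam hl _ i2
    have pt : ∀ x, hRe lam (1 + 1) x - hRe lam 1 x - hRe lam 1 x = (Real.exp (lam * x) - 1) ^ 2 := by
      intro x
      simp only [hRe, Complex.add_re, Complex.add_im, Complex.one_re, Complex.one_im,
        mul_zero, zero_mul, Real.cos_zero, mul_one, add_zero]
      have e3 : Real.exp (lam * (1 + 1) * x) = Real.exp (lam * x) ^ 2 := by
        rw [← Real.exp_nat_mul]; congr 1; push_cast; ring
      rw [e3]; ring
    have hI : ∫ x, (Real.exp (lam * x) - 1) ^ 2 ∂K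
        = ∫ x, hRe lam (1 + 1) x ∂K - ∫ x, hRe lam 1 x ∂K - ∫ x, hRe lam 1 x ∂K := by
      simp only [← pt]
      rw [integral_sub (by fun_prop) j1, integral_sub j2 j1]
    have hInteg : Integrable (fun x => (Real.exp (lam * x) - 1) ^ 2) K := by
      refine ((j2.sub j1).sub j1).congr (Filter.Eventually.of_forall fun x => ?_)
      exact pt x
    have hnn : 0 ≤ ∫ x, (Real.exp (lam * x) - 1) ^ 2 ∂K := integral_nonneg fun x => sq_nonneg _
    have hpos : 0 < c + (lam ^ 2)⁻¹ * ∫ x, (Real.exp (lam * x) - 1) ^ 2 ∂K := by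
      rcases hc.lt_or_eq with hc' | hc'
      · positivity
      · rcases hnn.lt_or_eq with h | h
        · positivity
        · exfalso
          rw [eq_comm, integral_eq_zero_iff_of_nonneg (fun x => sq_nonneg _) hInteg] at h
          have : ∫ x, x ^ 2 ∂K = 0 := by
            refine integral_eq_zero_of_ae ?_
            filter_upwards [h] with x hx
            simp only [Pi.zero_apply] at hx ⊢
            have : Real.exp (lam * x) = 1 := by nlinarith [pow_eq_zero_iff (two_ne_zero) |>.mp hx]
            rw [Real.exp_eq_one_iff] at this
            have : x = 0 := by simpa [hl0] using this
            simp [this]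
          rw [this, ← hc'] at hs
          simp at hs
    rw [hI] at hpos
    simp only [Complex.add_re, Complex.add_im, Complex.one_re, Complex.one_im]
    nlinarith

lemma exponent_re_le [SFinite K] (h0 : (0:ℝ) ∈ Ioo a b) (h2 : (2:ℝ) ∈ Ioo a b)
    (hmom : ∀ ρ ∈ Ioo a b, ∀ n : ℕ, 2 ≤ n → Integrable (fun x : ℝ => |x| ^ n * Real.exp (ρ * x)) K)
    (μ c : ℝ) (hc : 0 ≤ c) (hs : 0 < c + ∫ x, x ^ 2 ∂K) (lam : ℝ) (hl : lam ∈ Icc (0:ℝ) 1)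
    (R : ℝ) (h2R : 2 * R ∈ Ioo a b) (y z : ℂ) (hy : y.re = R) (hz : z.re = R) (T t : ℝ)
    (ht : t ∈ Icc 0 T) :
    (kappa μ c K lam (y + z) * (t : ℂ) + (etaLK μ c K lam y + etaLK μ c K lam z -
        kappa μ c K lam 1 ^ 2 / kbar μ c K lam 1 1) * ((T : ℂ) - (t : ℂ))).re
      ≤ (kappa μ c K lam ((2 * R : ℝ) : ℂ)).re * T := by
  have hq := kbar11_pos h0 h2 hmom μ c hc hs lam hl
  obtain ⟨k, hk⟩ := kappa_real (K := K) μ c lam 1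
  obtain ⟨k2, hk2⟩ := kappa_real (K := K) μ c lam 2
  rw [Complex.ofReal_one] at hk
  obtain ⟨q, hqq⟩ : ∃ q : ℝ, kbar μ c K lam 1 1 = (q : ℂ) := by
    refine ⟨k2 - k - k, ?_⟩
    unfold kbar
    rw [hk, show (1 + 1 : ℂ) = ((2 : ℝ) : ℂ) by push_cast; norm_num, hk2]
    push_cast; rfl
  rw [hqq, Complex.ofReal_re] at hq
  have hsum : (kappa μ c K lam (y + z)).re ≤ (kappa μ c K lam ((2 * R : ℝ) : ℂ)).re := by
    have e : (y + z).re = 2 * R := by rw [Complex.add_re, hy, hz]; ring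
    have := kappa_re_le h0 hmom μ c hc lam hl (y + z) (by rw [e]; exact h2R)
    rwa [e] at this
  have heta : ∀ z : ℂ, z.re = R → (etaLK μ c K lam z).re ≤
      (kappa μ c K lam ((2 * R : ℝ) : ℂ)).re / 2 + k ^ 2 / q / 2 := by
    intro z hz
    have h := kbar_quad h0 h2 hmom μ c hc lam hl z (by rw [hz]; exact h2R) (k / q)
    rw [hqq, hz, Complex.ofReal_re] at h
    have e : (etaLK μ c K lam z).re = (kappa μ c K lam z).re - (k / q) * (kbar μ c K lam z 1).re := by
      unfold etaLK gamLK
      rw [hqq, hk, Complex.sub_re, show (k : ℂ) * (kbar μ c K lam z 1 / (q : ℂ))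
        = ((k / q : ℝ) : ℂ) * kbar μ c K lam z 1 by push_cast; ring, Complex.re_ofReal_mul]
    rw [e]
    have e2 : (k / q) ^ 2 * q = k ^ 2 / q := by field_simp
    rw [e2] at h
    linarith
  have e3 : ((T : ℂ) - (t : ℂ)) = ((T - t : ℝ) : ℂ) := by push_cast; rfl
  have e4 : kappa μ c K lam 1 ^ 2 / kbar μ c K lam 1 1 = ((k ^ 2 / q : ℝ) : ℂ) := by
    rw [hk, hqq]; push_cast; rfl
  rw [e3, e4, Complex.add_re, Complex.re_mul_ofReal, Complex.re_mul_ofReal, Complex.sub_re,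
    Complex.add_re, Complex.ofReal_re]
  have h5 := heta y hy
  have h6 := heta z hz
  have h7 := mul_le_mul_of_nonneg_right hsum ht.1
  have h8 : ((etaLK μ c K lam y).re + (etaLK μ c K lam z).re - k ^ 2 / q) * (T - t)
      ≤ (kappa μ c K lam ((2 * R : ℝ) : ℂ)).re * (T - t) :=
    mul_le_mul_of_nonneg_right (by linarith) (by linarith [ht.2])
  linarith

end ReBounds


section Payoff
open FourierTransform

lemma pCoef_measurable (l : ℝ → ℝ) (hl : Measurable l) : Measurable (pCoef l) := by
  unfold pCoef lhat
  refine Measurable.div_const ?_ _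
  have : StronglyMeasurable (fun q : ℝ × ℝ => (l q.2 : ℂ) * Complex.exp (-(Complex.I * (q.2 : ℂ) * (q.1 : ℂ)))) := by
    refine Measurable.stronglyMeasurable ?_
    fun_prop
  exact (this.integral_prod_right).measurable

lemma lhat_bound (l : ℝ → ℝ) (hl : ContDiff ℝ (⊤ : ℕ∞) l)
    (hlint : ∀ n : ℕ, Integrable (iteratedDeriv n l)) (n : ℕ) (y : ℝ) :
    |y| ^ n * ‖lhat l y‖ ≤ ∫ x, ‖iteratedDeriv n l x‖ := by
  set L : ℝ → ℂ := fun x => (l x : ℂ) with hL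
  have hLc : ContDiff ℝ (⊤ : ℕ∞) L := Complex.ofRealCLM.contDiff.comp hl
  have hder : ∀ n : ℕ, iteratedDeriv n L = fun x => ((iteratedDeriv n l x : ℝ) : ℂ) := by
    intro n
    ext x
    rw [iteratedDeriv_eq_iteratedFDeriv, iteratedDeriv_eq_iteratedFDeriv]
    have := Complex.ofRealCLM.iteratedFDeriv_comp_left (f := l) (x := x) (n := (⊤ : ℕ∞)) (i := n)
      hl.contDiffAt (by exact_mod_cast le_top)
    have h2 : (⇑Complex.ofRealCLM ∘ l) = L := rfl
    rw [h2] at this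
    rw [this]
    rfl
  have hLint : ∀ n : ℕ, Integrable (iteratedDeriv n L) := by
    intro n; rw [hder]; exact (hlint n).ofReal
  have hF := Real.fourier_iteratedDeriv (f := L) (N := ⊤) (n := n) hLc (fun n _ => hLint n) le_top
  have h1 : lhat l y = 𝓕 L (y / (2 * Real.pi)) := by
    rw [Real.fourier_real_eq_integral_exp_smul]
    unfold lhat
    congr 1
    ext x
    simp only [hL, smul_eq_mul]
    rw [mul_comm]
    congr 2
    have : (Real.pi : ℂ) ≠ 0 := by exact_mod_cast Real.pi_ne_zero
    push_cast
    field_simp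
  have h2 := congrFun hF (y / (2 * Real.pi))
  simp only [smul_eq_mul] at h2
  rw [← h1] at h2
  have h3 : ‖𝓕 (iteratedDeriv n L) (y / (2 * Real.pi))‖ ≤ ∫ x, ‖iteratedDeriv n l x‖ := by
    rw [Real.fourier_real_eq_integral_exp_smul]
    refine (norm_integral_le_integral_norm _).trans (le_of_eq ?_)
    congr 1
    ext x
    rw [norm_smul, Complex.norm_exp_ofReal_mul_I, one_mul, hder, Complex.norm_real]
  rw [h2, norm_mul, norm_pow] at h3
  have h4 : ‖(2 * (Real.pi : ℂ) * Complex.I * ((y / (2 * Real.pi) : ℝ) : ℂ))‖ = |y| := by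
    have : (Real.pi : ℂ) ≠ 0 := by exact_mod_cast Real.pi_ne_zero
    have e : (2 * (Real.pi : ℂ) * Complex.I * ((y / (2 * Real.pi) : ℝ) : ℂ)) = Complex.I * (y : ℂ) := by
      push_cast; field_simp
    rw [e, norm_mul, Complex.norm_I, one_mul, Complex.norm_real, Real.norm_eq_abs]
  rwa [h4] at h3

lemma pCoef_integrable (l : ℝ → ℝ) (hl : ContDiff ℝ (⊤ : ℕ∞) l)
    (hlint : ∀ n : ℕ, Integrable (iteratedDeriv n l)) (N : ℕ) :
    Integrable (fun u : ℝ => (1 + |u|) ^ N * ‖pCoef l u‖) := by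
  have hm : Measurable (pCoef l) := pCoef_measurable l hl.continuous.measurable
  set C0 := ∫ x, ‖iteratedDeriv 0 l x‖
  set C1 := ∫ x, ‖iteratedDeriv (N + 2) l x‖
  have hi : Integrable (fun u : ℝ => (2 ^ (N + 2) * (C0 + C1)) * (1 + ‖u‖) ^ (-(2:ℝ))) :=
    (integrable_one_add_norm (by simp)).const_mul _
  refine hi.mono' (by fun_prop) (Filter.Eventually.of_forall fun u => ?_)
  have hp : ‖pCoef l u‖ ≤ ‖lhat l u‖ := by
    unfold pCoef
    rw [norm_div]
    refine div_le_self (norm_nonneg _) ?_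
    rw [norm_mul, Complex.norm_real, Real.norm_of_nonneg Real.pi_pos.le]
    simp only [Complex.norm_ofNat]
    linarith [Real.pi_gt_three]
  have b0 := lhat_bound l hl hlint 0 u
  have b1 := lhat_bound l hl hlint (N + 2) u
  rw [pow_zero, one_mul] at b0
  have hx : (1 + |u|) ^ (N + 2) ≤ 2 ^ (N + 2) * (1 + |u| ^ (N + 2)) := by
    have hu := abs_nonneg u
    rcases le_total |u| 1 with h | h
    · calc (1 + |u|) ^ (N + 2) ≤ (2 : ℝ) ^ (N + 2) := by gcongr; linarith
        _ ≤ _ := le_mul_of_one_le_right (by positivity) (by linarith [pow_nonneg hu (N + 2)])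
    · calc (1 + |u|) ^ (N + 2) ≤ (2 * |u|) ^ (N + 2) := by gcongr; linarith
        _ = 2 ^ (N + 2) * |u| ^ (N + 2) := by rw [mul_pow]
        _ ≤ _ := by gcongr; linarith
  have key : (1 + |u|) ^ (N + 2) * ‖pCoef l u‖ ≤ 2 ^ (N + 2) * (C0 + C1) := by
    calc (1 + |u|) ^ (N + 2) * ‖pCoef l u‖ ≤ 2 ^ (N + 2) * (1 + |u| ^ (N + 2)) * ‖lhat l u‖ := by gcongr
      _ = 2 ^ (N + 2) * (‖lhat l u‖ + |u| ^ (N + 2) * ‖lhat l u‖) := by ring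
      _ ≤ _ := by gcongr
  have hpos : 0 < 1 + |u| := by positivity
  rw [Real.norm_of_nonneg (by positivity), Real.norm_eq_abs, Real.rpow_neg hpos.le,
    ← div_eq_mul_inv, le_div_iff₀ (by positivity)]
  calc (1 + |u|) ^ N * ‖pCoef l u‖ * (1 + |u|) ^ (2:ℝ) = (1 + |u|) ^ (N + 2) * ‖pCoef l u‖ := by
        rw [show (1 + |u|) ^ (2:ℝ) = (1 + |u|) ^ 2 by exact_mod_cast Real.rpow_natCast _ 2]; ring
    _ ≤ _ := key

end Payoff

section Param

noncomputable def wt (a : ℝ × ℝ × ℝ) : ℝ := (1 + |a.1|) * (1 + |a.2.1|)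

def St (T : ℝ) : Set (ℝ × ℝ × ℝ) := {a | a.2.2 ∈ Icc 0 T}

noncomputable def nuT (T : ℝ) : Measure (ℝ × ℝ × ℝ) :=
  (volume : Measure ℝ).prod ((volume : Measure ℝ).prod (volume.restrict (Ioc 0 T)))

lemma one_le_wt (a : ℝ × ℝ × ℝ) : 1 ≤ wt a := by
  unfold wt
  exact one_le_mul_of_one_le_of_one_le (by linarith [abs_nonneg a.1]) (by linarith [abs_nonneg a.2.1])

lemma nuT_ae (T : ℝ) : ∀ᵐ a ∂(nuT T), a ∈ St T := by
  unfold nuT St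
  have h1 : ∀ᵐ y ∂(volume.restrict (Ioc (0:ℝ) T)), y ∈ Icc (0:ℝ) T := by
    filter_upwards [ae_restrict_mem measurableSet_Ioc] with y hy using ⟨hy.1.le, hy.2⟩
  have h2 := Measure.quasiMeasurePreserving_snd (μ := (volume : Measure ℝ)) |>.ae h1
  exact Measure.quasiMeasurePreserving_snd (μ := (volume : Measure ℝ)) |>.ae h2

lemma wt_integrable (P : ℝ → ℂ)
    (hP : ∀ N : ℕ, Integrable (fun u : ℝ => (1 + |u|) ^ N * ‖P u‖)) (T C : ℝ) (N : ℕ) :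
    Integrable (fun a : ℝ × ℝ × ℝ => C * wt a ^ N * (‖P a.1‖ * ‖P a.2.1‖)) (nuT T) := by
  unfold nuT
  have h1 := (hP N).mul_prod ((hP N).mul_prod
    (integrable_const (1:ℝ) : Integrable (fun _ : ℝ => (1:ℝ)) (volume.restrict (Ioc 0 T))))
  refine (h1.const_mul C).congr (Filter.Eventually.of_forall fun a => ?_)
  simp only [wt, mul_pow, mul_one]
  ring

lemma param_integrable (P : ℝ → ℂ) (hPm : Measurable P)
    (hP : ∀ N : ℕ, Integrable (fun u : ℝ => (1 + |u|) ^ N * ‖P u‖)) (T : ℝ)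
    {G : ℝ → ℝ × ℝ × ℝ → ℂ} (hm : ∀ x, Measurable (G x)) (hb : PolyBd (St T) wt G)
    (x : ℝ) (hx : x ∈ Icc (0:ℝ) 1) :
    Integrable (fun a => G x a * (P a.1 * P a.2.1)) (nuT T) := by
  obtain ⟨C, N, hC, h⟩ := hb
  refine (wt_integrable P hP T C N).mono' ?_ ?_
  · have := hm x
    exact (by fun_prop : Measurable fun a : ℝ × ℝ × ℝ => G x a * (P a.1 * P a.2.1)).aestronglyMeasurable
  · filter_upwards [nuT_ae T] with a ha
    rw [norm_mul, norm_mul]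
    gcongr
    exact h a ha x hx

lemma param_deriv (P : ℝ → ℂ) (hPm : Measurable P)
    (hP : ∀ N : ℕ, Integrable (fun u : ℝ => (1 + |u|) ^ N * ‖P u‖)) (T : ℝ)
    {G G1 : ℝ → ℝ × ℝ × ℝ → ℂ} (hm : ∀ x, Measurable (G x))
    (hb : PolyBd (St T) wt G) (hb1 : PolyBd (St T) wt G1)
    (hd : ∀ a ∈ St T, ∀ x ∈ Icc (0:ℝ) 1, HasDerivWithinAt (fun x => G x a) (G1 x a) (Icc 0 1) x)
    (x : ℝ) (hx : x ∈ Icc (0:ℝ) 1) :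
    HasDerivWithinAt (fun x => ∫ a, G x a * (P a.1 * P a.2.1) ∂(nuT T))
      (∫ a, G1 x a * (P a.1 * P a.2.1) ∂(nuT T)) (Icc 0 1) x := by
  obtain ⟨C, N, hC, h⟩ := hb
  obtain ⟨C', N', hC', h'⟩ := hb1
  refine hasDerivWithinAt_integral_Icc (F := fun x a => G x a * (P a.1 * P a.2.1))
    (F1 := fun x a => G1 x a * (P a.1 * P a.2.1))
    ((wt_integrable P hP T C N).add (wt_integrable P hP T C' N'))
    (fun x hx => (param_integrable P hPm hP T hm ⟨C, N, hC, h⟩ x hx).aestronglyMeasurable) ?_ ?_ ?_ x hx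
  · filter_upwards [nuT_ae T] with a ha x hx using (hd a ha x hx).mul_const _
  · filter_upwards [nuT_ae T] with a ha x hx
    have := one_le_wt a
    have h2 : 0 ≤ C' * wt a ^ N' * (‖P a.1‖ * ‖P a.2.1‖) := by positivity
    rw [norm_mul, norm_mul, Pi.add_apply]
    have := mul_le_mul_of_nonneg_right (h a ha x hx) (by positivity : 0 ≤ ‖P a.1‖ * ‖P a.2.1‖)
    linarith
  · filter_upwards [nuT_ae T] with a ha x hx
    have := one_le_wt a
    have h2 : 0 ≤ C * wt a ^ N * (‖P a.1‖ * ‖P a.2.1‖) := by positivity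
    rw [norm_mul, norm_mul, Pi.add_apply]
    have := mul_le_mul_of_nonneg_right (h' a ha x hx) (by positivity : 0 ≤ ‖P a.1‖ * ‖P a.2.1‖)
    linarith

lemma param_continuous (P : ℝ → ℂ) (hPm : Measurable P)
    (hP : ∀ N : ℕ, Integrable (fun u : ℝ => (1 + |u|) ^ N * ‖P u‖)) (T : ℝ)
    {G : ℝ → ℝ × ℝ × ℝ → ℂ} (hm : ∀ x, Measurable (G x)) (hb : PolyBd (St T) wt G)
    (hc : ∀ a ∈ St T, ContinuousOn (fun x => G x a) (Icc 0 1)) :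
    ContinuousOn (fun x => ∫ a, G x a * (P a.1 * P a.2.1) ∂(nuT T)) (Icc 0 1) := by
  obtain ⟨C, N, hC, h⟩ := hb
  refine continuousOn_of_dominated (bound := fun a => C * wt a ^ N * (‖P a.1‖ * ‖P a.2.1‖))
    (fun x hx => (param_integrable P hPm hP T hm ⟨C, N, hC, h⟩ x hx).aestronglyMeasurable)
    (fun x hx => ?_) (wt_integrable P hP T C N) ?_
  · filter_upwards [nuT_ae T] with a ha
    rw [norm_mul, norm_mul]
    gcongr
    exact h a ha x hx
  · filter_upwards [nuT_ae T] with a ha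
    exact (hc a ha).mul continuousOn_const

lemma nuT_iterated (T : ℝ) (hT : 0 ≤ T) (g : ℝ × ℝ × ℝ → ℂ) (hg : Integrable g (nuT T)) :
    ∫ a, g a ∂(nuT T) = ∫ u : ℝ, ∫ v : ℝ, ∫ t in (0:ℝ)..T, g (u, v, t) := by
  unfold nuT at hg ⊢
  rw [integral_prod _ hg]
  refine integral_congr_ae ?_
  filter_upwards [hg.prod_right_ae] with u hu
  rw [integral_prod _ hu]
  simp only [intervalIntegral.integral_of_le hT]

end Param


section Family
variable {K : Measure ℝ} {a b : ℝ}

lemma kappa_measurable [SFinite K] (μ c lam : ℝ) : Measurable (fun z => kappa μ c K lam z) := by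
  unfold kappa
  split_ifs with h
  · fun_prop
  · refine Measurable.add (by fun_prop) (Measurable.const_mul ?_ _)
    have : StronglyMeasurable (fun q : ℂ × ℝ =>
        (Complex.exp ((lam : ℂ) * q.1 * (q.2 : ℂ)) - 1 - (lam : ℂ) * q.1 * (q.2 : ℂ))) := by
      refine Measurable.stronglyMeasurable ?_
      fun_prop
    exact (this.integral_prod_right).measurable

lemma kappa_isC2 [SFinite K] (h0 : (0:ℝ) ∈ Ioo a b)
    (hmom : ∀ ρ ∈ Ioo a b, ∀ n : ℕ, 2 ≤ n → Integrable (fun x : ℝ => |x| ^ n * Real.exp (ρ * x)) K)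
    (μ c : ℝ) {α : Type*} [MeasurableSpace α] {S : Set α} {w : α → ℝ} (hw : ∀ e ∈ S, 1 ≤ w e)
    {Z : α → ℂ} (hZm : Measurable Z) (ρ : ℝ) (hρ : ρ ∈ Ioo a b) (hZ : ∀ e, (Z e).re = ρ)
    (D : ℝ) (hD : ∀ e ∈ S, ‖Z e‖ ≤ D * w e) :
    IsC2 S w (fun x e => kappa μ c K x (Z e)) (fun x e => kap K 1 x (Z e))
      (fun x e => kap K 2 x (Z e)) := by
  have hD' : ∀ e ∈ S, ‖Z e‖ ≤ |D| * w e := fun e he => by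
    refine (hD e he).trans ?_
    have := hw e he
    gcongr
    exact le_abs_self D
  have hk : ∀ j : ℕ, PolyBd S w (fun x e => kap K j x (Z e)) := by
    intro j
    obtain ⟨C, hC, hb⟩ := kap_bound h0 hmom j ρ hρ
    refine ⟨C * |D| ^ (2 + j), 2 + j, by positivity, fun e he x hx => ?_⟩
    calc ‖kap K j x (Z e)‖ ≤ C * ‖Z e‖ ^ (2 + j) := hb x hx (Z e) (hZ e)
      _ ≤ C * (|D| * w e) ^ (2 + j) := by gcongr; exact hD' e he
      _ = _ := by rw [mul_pow]; ring
  have hZb : PolyBd S w (fun _ e => Z e) := ⟨|D|, 1, abs_nonneg _, fun e he x hx => by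
    rw [pow_one]; exact hD' e he⟩
  have heq : ∀ e, ∀ x ∈ Icc (0:ℝ) 1, kappa μ c K x (Z e) =
      ((μ : ℂ) * Z e + ((c : ℂ) / 2) * (Z e * Z e)) + kap K 0 x (Z e) := fun e x hx => by
    rw [kappa_eq_kap h0 hmom μ c x hx (Z e) (by rw [hZ e]; exact hρ), sq]
  have hcb : PolyBd S w (fun x e => ((μ : ℂ) * Z e + ((c : ℂ) / 2) * (Z e * Z e)) + kap K 0 x (Z e)) :=
    (((PolyBd.const _).mul hw hZb).add hw ((PolyBd.const _).mul hw (hZb.mul hw hZb))).add hw (hk 0)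
  have hd := fun (j : ℕ) (e : α) (x : ℝ) (hx : x ∈ Icc (0:ℝ) 1) =>
    kap_deriv h0 hmom j (Z e) (by rw [hZ e]; exact hρ) x hx
  exact
  { d1 := fun e he x hx =>
      ((hd 0 e x hx).const_add _).congr (fun y hy => heq e y hy) (heq e x hx)
    d2 := fun e he x hx => hd 1 e x hx
    c2 := fun e he x hx => (hd 2 e x hx).continuousWithinAt
    m0 := fun x => (kappa_measurable μ c x).comp hZm
    m1 := fun x => (kap_measurable K 1 x).comp hZm
    m2 := fun x => (kap_measurable K 2 x).comp hZm
    b0 := by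
      obtain ⟨C, N, hC, h⟩ := hcb
      exact ⟨C, N, hC, fun e he x hx => by
        show ‖kappa μ c K x (Z e)‖ ≤ _
        rw [heq e x hx]; exact h e he x hx⟩
    b1 := hk 1
    b2 := hk 2 }

noncomputable def kb (K : Measure ℝ) (j : ℕ) (x : ℝ) (y z : ℂ) : ℂ :=
  kap K j x (y + z) - kap K j x y - kap K j x z

lemma kap1_zero [SFinite K] (z : ℂ) : kap K 1 0 z = ((∫ x : ℝ, x ^ 3 ∂K : ℝ) : ℂ) / 6 * z ^ 3 := by
  rw [kap_zero, kap_coef]; push_cast; norm_num; ring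

lemma kap2_zero [SFinite K] (z : ℂ) : kap K 2 0 z = ((∫ x : ℝ, x ^ 4 ∂K : ℝ) : ℂ) / 12 * z ^ 4 := by
  rw [kap_zero, kap_coef]; push_cast; norm_num; ring

lemma kappa_at_zero (μ c : ℝ) (σ2 : ℝ) (hσ2 : σ2 = c + ∫ x : ℝ, x ^ 2 ∂K) (z : ℂ) :
    kappa μ c K 0 z = (μ : ℂ) * z + (σ2 : ℂ) / 2 * z ^ 2 := by
  unfold kappa; rw [if_pos rfl, hσ2]

lemma kbar_at_zero (μ c : ℝ) (σ2 : ℝ) (hσ2 : σ2 = c + ∫ x : ℝ, x ^ 2 ∂K) (y z : ℂ) :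
    kbar μ c K 0 y z = (σ2 : ℂ) * y * z := by
  unfold kbar; simp only [kappa_at_zero μ c σ2 hσ2]; ring

/-- the integrand without payoff coefficients -/
noncomputable def Jint (μ c : ℝ) (K : Measure ℝ) (T S₀ : ℝ) (lam : ℝ) (y z : ℂ) (t : ℝ) : ℂ :=
  cpowR S₀ (y + z) * (kbar μ c K lam y z - kbar μ c K lam y 1 * kbar μ c K lam z 1 /
      kbar μ c K lam 1 1) *
    Complex.exp (kappa μ c K lam (y + z) * (t : ℂ) +
      (etaLK μ c K lam y + etaLK μ c K lam z - kappa μ c K lam 1 ^ 2 / kbar μ c K lam 1 1) *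
        ((T : ℂ) - (t : ℂ)))

lemma Jint_isC2 [SFinite K] (h0 : (0:ℝ) ∈ Ioo a b) (h2 : (2:ℝ) ∈ Ioo a b)
    (hmom : ∀ ρ ∈ Ioo a b, ∀ n : ℕ, 2 ≤ n → Integrable (fun x : ℝ => |x| ^ n * Real.exp (ρ * x)) K)
    (μ c : ℝ) (hc : 0 ≤ c) (σ2 : ℝ) (hσ2 : σ2 = c + ∫ x : ℝ, x ^ 2 ∂K) (hσ2pos : 0 < σ2)
    (R : ℝ) (h2R : 2 * R ∈ Ioo a b) (T S₀ : ℝ) (hT : 0 < T) :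
    ∃ G G1 G2 : ℝ → ℝ × ℝ × ℝ → ℂ, IsC2 (St T) wt G G1 G2 ∧
      (∀ e, ∀ x ∈ Icc (0:ℝ) 1, G x e = Jint μ c K T S₀ x (zLine R e.1) (zLine R e.2.1) e.2.2) ∧
      (∀ e, G1 0 e = 0) ∧
      (∀ e, G2 0 e = ((((∫ x : ℝ, x ^ 4 ∂K) - (∫ x : ℝ, x ^ 3 ∂K) ^ 2 / σ2) / 2 : ℝ) : ℂ) *
        (zLine R e.1 * (zLine R e.1 - 1) * (zLine R e.2.1 * (zLine R e.2.1 - 1))) *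
        (cpowR S₀ (zLine R e.1 + zLine R e.2.1) *
        Complex.exp (kappa μ c K 0 (zLine R e.1 + zLine R e.2.1) * (e.2.2 : ℂ) +
          (etaLK μ c K 0 (zLine R e.1) + etaLK μ c K 0 (zLine R e.2.1)
            - kappa μ c K 0 1 ^ 2 / kbar μ c K 0 1 1) * ((T : ℂ) - (e.2.2 : ℂ))))) := by
  have hw : ∀ e ∈ St T, 1 ≤ wt e := fun e _ => one_le_wt e
  have hs : 0 < c + ∫ x : ℝ, x ^ 2 ∂K := hσ2 ▸ hσ2pos
  set Y : ℝ × ℝ × ℝ → ℂ := fun e => zLine R e.1 with hY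
  set Z : ℝ × ℝ × ℝ → ℂ := fun e => zLine R e.2.1 with hZ
  have hzre : ∀ u, (zLine R u).re = R := fun u => by simp [zLine]
  have hzn : ∀ u, ‖zLine R u‖ ≤ |R| + |u| := fun u => by
    unfold zLine
    refine (norm_add_le _ _).trans ?_
    simp
  have hYm : Measurable Y := by simp only [hY, zLine]; fun_prop
  have hZm : Measurable Z := by simp only [hZ, zLine]; fun_prop
  have hYb : ∀ e ∈ St T, ‖Y e‖ ≤ (|R| + 1) * wt e := fun e _ => by
    refine (hzn _).trans ?_
    unfold wt
    nlinarith [abs_nonneg R, abs_nonneg e.1, abs_nonneg e.2.1, mul_nonneg (abs_nonneg e.1) (abs_nonneg e.2.1), mul_nonneg (abs_nonneg R) (abs_nonneg e.1), mul_nonneg (abs_nonneg R) (abs_nonneg e.2.1), mul_nonneg (abs_nonneg R) (mul_nonneg (abs_nonneg e.1) (abs_nonneg e.2.1))]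
  have hZb : ∀ e ∈ St T, ‖Z e‖ ≤ (|R| + 1) * wt e := fun e _ => by
    refine (hzn _).trans ?_
    unfold wt
    nlinarith [abs_nonneg R, abs_nonneg e.1, abs_nonneg e.2.1, mul_nonneg (abs_nonneg e.1) (abs_nonneg e.2.1), mul_nonneg (abs_nonneg R) (abs_nonneg e.1), mul_nonneg (abs_nonneg R) (abs_nonneg e.2.1), mul_nonneg (abs_nonneg R) (mul_nonneg (abs_nonneg e.1) (abs_nonneg e.2.1))]
  have hob : ∀ e ∈ St T, ‖(1:ℂ)‖ ≤ 1 * wt e := fun e he => by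
    rw [norm_one, one_mul]; exact hw e he
  have iR : R ∈ Ioo a b := ⟨by linarith [h0.1, h2R.1], by linarith [h0.2, h2R.2]⟩
  have i1 : (1:ℝ) ∈ Ioo a b := ⟨by linarith [h0.1, h2.1], by linarith [h0.2, h2.2]⟩
  have iR1 : R + 1 ∈ Ioo a b := ⟨by linarith [h2R.1, h2.1], by linarith [h2R.2, h2.2]⟩
  have cY := kappa_isC2 h0 hmom μ c hw hYm R iR (fun e => hzre _) _ hYb
  have cZ := kappa_isC2 h0 hmom μ c hw hZm R iR (fun e => hzre _) _ hZb
  have c1 := kappa_isC2 (α := ℝ × ℝ × ℝ) (Z := fun _ => (1:ℂ)) h0 hmom μ c hw measurable_const 1 i1 (fun e => by simp) _ hob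
  have c2 := kappa_isC2 (α := ℝ × ℝ × ℝ) (Z := fun _ => (1 + 1:ℂ)) h0 hmom μ c hw measurable_const 2 h2
    (fun e => by simp; norm_num) (1 + 1) (fun e he => by
      rw [add_mul]; exact (norm_add_le _ _).trans (add_le_add (hob e he) (hob e he)))
  have cYZ := kappa_isC2 (Z := fun e => Y e + Z e) h0 hmom μ c hw (hYm.add hZm) (2 * R) h2R
    (fun e => by rw [Complex.add_re, hzre, hzre]; ring) ((|R| + 1) + (|R| + 1)) (fun e he => by
      rw [add_mul]; exact (norm_add_le _ _).trans (add_le_add (hYb e he) (hZb e he)))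
  have cY1 := kappa_isC2 (Z := fun e => Y e + 1) h0 hmom μ c hw (hYm.add_const 1) (R + 1) iR1
    (fun e => by rw [Complex.add_re, hzre]; simp) ((|R| + 1) + 1) (fun e he => by
      rw [add_mul]; exact (norm_add_le _ _).trans (add_le_add (hYb e he) (hob e he)))
  have cZ1 := kappa_isC2 (Z := fun e => Z e + 1) h0 hmom μ c hw (hZm.add_const 1) (R + 1) iR1
    (fun e => by rw [Complex.add_re, hzre]; simp) ((|R| + 1) + 1) (fun e he => by
      rw [add_mul]; exact (norm_add_le _ _).trans (add_le_add (hZb e he) (hob e he)))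
  have bYZ : IsC2 (St T) wt (fun x e => kbar μ c K x (Y e) (Z e)) (fun x e => kb K 1 x (Y e) (Z e))
    (fun x e => kb K 2 x (Y e) (Z e)) := (cYZ.sub hw cY).sub hw cZ
  have bY1 : IsC2 (St T) wt (fun x e => kbar μ c K x (Y e) 1) (fun x e => kb K 1 x (Y e) 1)
    (fun x e => kb K 2 x (Y e) 1) := (cY1.sub hw cY).sub hw c1
  have bZ1 : IsC2 (St T) wt (fun x e => kbar μ c K x (Z e) 1) (fun x e => kb K 1 x (Z e) 1)
    (fun x e => kb K 2 x (Z e) 1) := (cZ1.sub hw cZ).sub hw c1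
  have b11 : IsC2 (St T) wt (fun x e => kbar μ c K x 1 1) (fun x e => kb K 1 x 1 1)
    (fun x e => kb K 2 x 1 1) := (c2.sub hw c1).sub hw c1
  -- lower bound for the denominator
  have hpos := fun x hx => kbar11_pos h0 h2 hmom μ c hc hs x hx
  have hne : ∀ x ∈ Icc (0:ℝ) 1, kbar μ c K x 1 1 ≠ 0 := fun x hx h => by
    have := hpos x hx
    rw [h] at this; simp at this
  have h0S : ((0, 0, 0) : ℝ × ℝ × ℝ) ∈ St T := ⟨le_rfl, hT.le⟩
  obtain ⟨δ, hδ, hδb⟩ : ∃ δ : ℝ, 0 < δ ∧ ∀ x ∈ Icc (0:ℝ) 1, δ ≤ ‖kbar μ c K x 1 1‖ := by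
    have hcont : ContinuousOn (fun x => ‖kbar μ c K x 1 1‖) (Icc 0 1) := (b11.k0 _ h0S).norm
    obtain ⟨x0, hx0, hmin⟩ := isCompact_Icc.exists_isMinOn (nonempty_Icc.mpr zero_le_one) hcont
    exact ⟨_, norm_pos_iff.mpr (hne x0 hx0), fun x hx => hmin hx⟩
  obtain ⟨Q1, Q2, cQ⟩ := b11.inv hw δ hδ (fun e _ x hx => hδb x hx)
  -- exponent
  have ct : IsC2 (St T) wt (fun _ e => (e.2.2 : ℂ)) (fun _ _ => 0) (fun _ _ => 0) :=
    IsC2.static (g := fun e : ℝ × ℝ × ℝ => (e.2.2 : ℂ)) (by fun_prop) (PolyBd.of_bounded T (fun e he x hx => by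
      rw [Complex.norm_real, Real.norm_of_nonneg he.1]; exact he.2))
  have cTt : IsC2 (St T) wt (fun _ e => (T : ℂ) - (e.2.2 : ℂ)) (fun _ _ => 0) (fun _ _ => 0) :=
    IsC2.static (g := fun e : ℝ × ℝ × ℝ => (T : ℂ) - (e.2.2 : ℂ)) (by fun_prop) (PolyBd.of_bounded T (fun e he x hx => by
      rw [← Complex.ofReal_sub, Complex.norm_real, Real.norm_of_nonneg (by linarith [he.2])]
      linarith [he.1]))
  have eY := cY.sub hw (c1.mul hw (bY1.mul hw cQ))
  have eZ := cZ.sub hw (c1.mul hw (bZ1.mul hw cQ))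
  have cX := (cYZ.mul hw ct).add hw
    (((eY.add hw eZ).sub hw ((c1.mul hw c1).mul hw cQ)).mul hw cTt)
  obtain ⟨Ck, hCk, hkb⟩ := (kappa_isC2 (α := ℝ × ℝ × ℝ) (S := St T) (w := fun _ => (1:ℝ)) (Z := fun _ => (((2 * R : ℝ)) : ℂ)) h0 hmom μ c
    (fun _ _ => le_rfl) measurable_const (2 * R) h2R (fun e => Complex.ofReal_re _)
    ‖(((2 * R : ℝ)) : ℂ)‖ (fun e he => by simp)).b0
  obtain ⟨hCk0, hkb⟩ := hkb
  have cE := cX.exp hw (Real.exp (Ck * T)) (fun e he x hx => by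
    rw [Complex.norm_exp]
    refine Real.exp_le_exp.mpr ?_
    have h3 := exponent_re_le h0 h2 hmom μ c hc hs x hx R h2R (Y e) (Z e) (hzre _) (hzre _) T e.2.2 he
    have h4 := hkb e he x hx
    rw [one_pow, mul_one] at h4
    have h5 : (kappa μ c K x ((2 * R : ℝ) : ℂ)).re * T ≤ Ck * T :=
      mul_le_mul_of_nonneg_right ((Complex.re_le_norm _).trans h4) hT.le
    refine le_trans (le_of_eq ?_) (h3.trans h5)
    congr 1
    simp only [etaLK, gamLK, div_eq_mul_inv, sq])
  have cW : IsC2 (St T) wt (fun _ e => cpowR S₀ (Y e + Z e)) (fun _ _ => 0) (fun _ _ => 0) :=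
    IsC2.static (g := fun e => cpowR S₀ (Y e + Z e)) (by unfold cpowR; fun_prop)
      (PolyBd.of_bounded (Real.exp (2 * R * Real.log S₀)) (fun e he x hx => by
        unfold cpowR
        rw [Complex.norm_exp, Complex.re_mul_ofReal, Complex.add_re, hzre, hzre, two_mul]))
  obtain ⟨E1, E2, cE'⟩ : ∃ E1 E2, IsC2 (St T) wt (fun x e =>
      Complex.exp (kappa μ c K x (Y e + Z e) * (e.2.2 : ℂ) +
        (etaLK μ c K x (Y e) + etaLK μ c K x (Z e)
          - kappa μ c K x 1 ^ 2 / kbar μ c K x 1 1) * ((T : ℂ) - (e.2.2 : ℂ)))) E1 E2 := by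
    simp only [etaLK, gamLK, div_eq_mul_inv, sq]
    exact ⟨_, _, cE⟩
  obtain ⟨H1, H2, cH⟩ : ∃ H1 H2, IsC2 (St T) wt (fun x e => (kbar μ c K x 1 1)⁻¹ *
      (cpowR S₀ (Y e + Z e) * Complex.exp (kappa μ c K x (Y e + Z e) * (e.2.2 : ℂ) +
        (etaLK μ c K x (Y e) + etaLK μ c K x (Z e)
          - kappa μ c K x 1 ^ 2 / kbar μ c K x 1 1) * ((T : ℂ) - (e.2.2 : ℂ))))) H1 H2 :=
    ⟨_, _, cQ.mul hw (cW.mul hw cE')⟩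
  have cB := (bYZ.mul hw b11).sub hw (bY1.mul hw bZ1)
  have cG := cB.mul hw cH
  refine ⟨_, _, _, cG, ?_, ?_, ?_⟩
  · intro e x hx
    have := hne x hx
    unfold Jint
    simp only [hY, hZ]
    generalize Complex.exp _ = E
    field_simp
  · intro e
    simp only [kbar_at_zero μ c σ2 hσ2, kb, kap1_zero]
    ring
  · intro e
    have e2 : zLine R e.1 = Y e := rfl
    have e3 : zLine R e.2.1 = Z e := rfl
    rw [e2, e3]
    generalize Complex.exp _ = E
    generalize cpowR S₀ (Y e + Z e) = W
    simp only [kbar_at_zero μ c σ2 hσ2, kb, kap1_zero, kap2_zero]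
    have hσne : (σ2 : ℂ) ≠ 0 := by exact_mod_cast hσ2pos.ne'
    push_cast
    field_simp
    ring

end Family

section Gauss

lemma zLine_re (R u : ℝ) : (zLine R u).re = R := by simp [zLine]

lemma zLine_measurable (R : ℝ) : Measurable (zLine R) := by unfold zLine; fun_prop

lemma gauss_square (R : ℝ) (v : NNReal) (q : ℝ → ℂ) (hq : Integrable q) :
    ∫ x : ℝ, (∫ u : ℝ, q u * Complex.exp (zLine R u * (x : ℂ))) ^ 2 ∂(gaussianReal 0 v) =
      ∫ w : ℝ × ℝ, q w.1 * q w.2 *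
        Complex.exp ((v : ℂ) * (zLine R w.1 + zLine R w.2) ^ 2 / 2) := by
  have hzm := zLine_measurable R
  have h1 : ∀ x : ℝ, (∫ u : ℝ, q u * Complex.exp (zLine R u * (x : ℂ))) ^ 2 =
      ∫ w : ℝ × ℝ, (q w.1 * q w.2) * Complex.exp ((zLine R w.1 + zLine R w.2) * (x : ℂ)) := by
    intro x
    rw [sq, ← integral_prod_mul, ← Measure.volume_eq_prod]
    refine integral_congr_ae (Filter.Eventually.of_forall fun w => ?_)
    simp only [add_mul, Complex.exp_add]
    ring
  simp only [h1]
  have hqq : Integrable (fun w : ℝ × ℝ => q w.1 * q w.2) := hq.mul_prod hq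
  have hInteg : Integrable (Function.uncurry fun (x : ℝ) (w : ℝ × ℝ) =>
      (q w.1 * q w.2) * Complex.exp ((zLine R w.1 + zLine R w.2) * (x : ℂ)))
      ((gaussianReal 0 v).prod volume) := by
    have h2 := (integrable_exp_mul_gaussianReal (μ := 0) (v := v) (2 * R)).mul_prod hqq.norm
    refine h2.mono' ?_ (Filter.Eventually.of_forall fun p => ?_)
    · refine AEStronglyMeasurable.mul ?_ ?_
      · exact hqq.aestronglyMeasurable.comp_snd
      · refine Measurable.aestronglyMeasurable ?_
        fun_prop
    · obtain ⟨x, w⟩ := p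
      simp only [Function.uncurry_apply_pair, norm_mul, Complex.norm_exp, Complex.re_mul_ofReal,
        Complex.add_re, zLine_re]
      rw [← two_mul, mul_comm]
  rw [integral_integral_swap hInteg]
  refine integral_congr_ae (Filter.Eventually.of_forall fun w => ?_)
  simp only
  rw [integral_const_mul]
  congr 1
  have := complexMGF_id_gaussianReal (μ := 0) (v := v) (zLine R w.1 + zLine R w.2)
  unfold complexMGF at this
  simpa using this

noncomputable def qG (σ2 T R μ S₀ : ℝ) (l : ℝ → ℝ) (t u : ℝ) : ℂ :=
  zLine R u * (zLine R u - 1) * (cpowR S₀ (zLine R u) * Complex.exp (zLine R u * ((μ * t : ℝ) : ℂ)) *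
    Complex.exp (((σ2 : ℂ) / 2) * zLine R u * (zLine R u - 1) * ((T : ℂ) - (t : ℂ)))) * pCoef l u

lemma cashGreek_eq (σ2 T R μ S₀ : ℝ) (hS : 0 < S₀) (l : ℝ → ℝ) (t x : ℝ) :
    cashGreek σ2 T R l 2 t (S₀ * Real.exp (μ * t + x)) =
      ∫ u : ℝ, qG σ2 T R μ S₀ l t u * Complex.exp (zLine R u * (x : ℂ)) := by
  unfold cashGreek qG
  refine integral_congr_ae (Filter.Eventually.of_forall fun u => ?_)
  simp only [Finset.prod_range_succ, Finset.prod_range_zero, cpowR]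
  rw [Real.log_mul hS.ne' (Real.exp_pos _).ne', Real.log_exp]
  push_cast
  rw [show zLine R u * ((Real.log S₀ : ℂ) + ((μ : ℂ) * t + x)) = zLine R u * (Real.log S₀ : ℂ) +
    (zLine R u * ((μ : ℂ) * t) + zLine R u * x) by ring, Complex.exp_add, Complex.exp_add]
  ring

lemma qG_integrable (σ2 T R μ S₀ : ℝ) (hσ : 0 < σ2) (l : ℝ → ℝ) (hlm : Measurable (pCoef l))
    (hp : ∀ N : ℕ, Integrable (fun u : ℝ => (1 + |u|) ^ N * ‖pCoef l u‖)) (t : ℝ) (ht : t ≤ T) :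
    Integrable (qG σ2 T R μ S₀ l t) := by
  have hzm := zLine_measurable R
  have hzn : ∀ u, ‖zLine R u‖ ≤ |R| + |u| := fun u => by
    unfold zLine
    refine (norm_add_le _ _).trans ?_
    simp
  set A := Real.exp (R * Real.log S₀) * Real.exp (R * (μ * t)) * Real.exp (σ2 / 2 * (R ^ 2 - R) * (T - t))
  refine ((hp 2).const_mul ((|R| + 2) ^ 2 * A)).mono' ?_ (Filter.Eventually.of_forall fun u => ?_)
  · unfold qG cpowR
    refine Measurable.aestronglyMeasurable ?_
    fun_prop
  · unfold qG cpowR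
    simp only [norm_mul]
    have e1 : ‖Complex.exp (zLine R u * (Real.log S₀ : ℂ))‖ = Real.exp (R * Real.log S₀) := by
      rw [Complex.norm_exp, Complex.re_mul_ofReal, zLine_re]
    have e2 : ‖Complex.exp (zLine R u * ((μ * t : ℝ) : ℂ))‖ = Real.exp (R * (μ * t)) := by
      rw [Complex.norm_exp, Complex.re_mul_ofReal, zLine_re]
    have e3 : ‖Complex.exp (((σ2 : ℂ) / 2) * zLine R u * (zLine R u - 1) * ((T : ℂ) - (t : ℂ)))‖ ≤
        Real.exp (σ2 / 2 * (R ^ 2 - R) * (T - t)) := by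
      rw [Complex.norm_exp]
      refine Real.exp_le_exp.mpr ?_
      have : (((σ2 : ℂ) / 2) * zLine R u * (zLine R u - 1) * ((T : ℂ) - (t : ℂ))) =
          ((σ2 / 2 * (R ^ 2 - R - u ^ 2) * (T - t) : ℝ) : ℂ) +
          ((σ2 / 2 * (2 * R * u - u) * (T - t) : ℝ) : ℂ) * Complex.I := by
        unfold zLine
        push_cast
        ring_nf
        rw [Complex.I_sq]
        ring
      rw [this, Complex.add_re, Complex.ofReal_re, Complex.re_ofReal_mul, Complex.I_re, mul_zero, add_zero]
      have h1 : 0 ≤ T - t := by linarith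
      have h2 : R ^ 2 - R - u ^ 2 ≤ R ^ 2 - R := by linarith [sq_nonneg u]
      exact mul_le_mul_of_nonneg_right (mul_le_mul_of_nonneg_left h2 (by positivity)) h1
    have e4 : ‖zLine R u‖ ≤ (|R| + 2) * (1 + |u|) := by
      refine (hzn u).trans ?_
      nlinarith [abs_nonneg R, abs_nonneg u, mul_nonneg (abs_nonneg R) (abs_nonneg u)]
    have e5 : ‖zLine R u - 1‖ ≤ (|R| + 2) * (1 + |u|) := by
      refine (norm_sub_le _ _).trans ?_
      rw [norm_one]
      nlinarith [hzn u, abs_nonneg R, abs_nonneg u, mul_nonneg (abs_nonneg R) (abs_nonneg u)]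
    rw [e1, e2]
    calc _ ≤ ((|R| + 2) * (1 + |u|)) * ((|R| + 2) * (1 + |u|)) * A * ‖pCoef l u‖ := by
          gcongr
          exact mul_le_mul_of_nonneg_left e3 (by positivity)
      _ = _ := by ring

lemma gauss_final {K : Measure ℝ} (σ2 T R μ c S₀ : ℝ) (hσ2 : σ2 = c + ∫ x : ℝ, x ^ 2 ∂K)
    (hσ : 0 < σ2) (hS : 0 < S₀) (l : ℝ → ℝ) (hlm : Measurable (pCoef l))
    (hp : ∀ N : ℕ, Integrable (fun u : ℝ => (1 + |u|) ^ N * ‖pCoef l u‖)) (t : ℝ) (ht0 : 0 ≤ t)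
    (ht : t ≤ T) :
    ((Real.exp (-((μ + σ2 / 2) ^ 2 / σ2) * (T - t)) : ℝ) : ℂ) *
          ∫ x : ℝ, (cashGreek σ2 T R l 2 t (S₀ * Real.exp (μ * t + x))) ^ 2
            ∂(gaussianReal 0 (Real.toNNReal (σ2 * t))) =
    ∫ w : ℝ × ℝ, (zLine R w.1 * (zLine R w.1 - 1) * (zLine R w.2 * (zLine R w.2 - 1))) *
        (cpowR S₀ (zLine R w.1 + zLine R w.2) *
        Complex.exp (kappa μ c K 0 (zLine R w.1 + zLine R w.2) * (t : ℂ) +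
          (etaLK μ c K 0 (zLine R w.1) + etaLK μ c K 0 (zLine R w.2)
            - kappa μ c K 0 1 ^ 2 / kbar μ c K 0 1 1) * ((T : ℂ) - (t : ℂ)))) *
        (pCoef l w.1 * pCoef l w.2) := by
  simp only [cashGreek_eq σ2 T R μ S₀ hS l t]
  rw [gauss_square R _ _ (qG_integrable σ2 T R μ S₀ hσ l hlm hp t ht), ← integral_const_mul]
  refine integral_congr_ae (Filter.Eventually.of_forall fun w => ?_)
  have hv : (((Real.toNNReal (σ2 * t) : NNReal) : ℝ) : ℂ) = (σ2 : ℂ) * (t : ℂ) := by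
    rw [Real.coe_toNNReal _ (by positivity)]; push_cast; ring
  have hσne : (σ2 : ℂ) ≠ 0 := by exact_mod_cast hσ.ne'
  simp only [qG]
  generalize zLine R w.1 = y
  generalize zLine R w.2 = z
  have key : Complex.exp (kappa μ c K 0 (y + z) * (t : ℂ) +
          (etaLK μ c K 0 y + etaLK μ c K 0 z
            - kappa μ c K 0 1 ^ 2 / kbar μ c K 0 1 1) * ((T : ℂ) - (t : ℂ))) =
      Complex.exp (((-((μ + σ2 / 2) ^ 2 / σ2) * (T - t) : ℝ) : ℂ)) *
      (Complex.exp (y * ((μ * t : ℝ) : ℂ)) * Complex.exp (z * ((μ * t : ℝ) : ℂ))) *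
      (Complex.exp (((σ2 : ℂ) / 2) * y * (y - 1) * ((T : ℂ) - (t : ℂ))) *
       Complex.exp (((σ2 : ℂ) / 2) * z * (z - 1) * ((T : ℂ) - (t : ℂ)))) *
      Complex.exp ((((Real.toNNReal (σ2 * t) : NNReal) : ℝ) : ℂ) * (y + z) ^ 2 / 2) := by
    rw [hv]
    simp only [← Complex.exp_add]
    congr 1
    simp only [etaLK, gamLK, kappa_at_zero μ c σ2 hσ2, kbar_at_zero μ c σ2 hσ2]
    push_cast
    field_simp
    ring
  rw [key, Complex.ofReal_exp]
  simp only [cpowR, add_mul y z, Complex.exp_add]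
  have hc : ((Real.toNNReal (σ2 * t) : NNReal) : ℂ) = (((Real.toNNReal (σ2 * t) : NNReal) : ℝ) : ℂ) := rfl
  ring

lemma nuT_swap (T : ℝ) (hT : 0 ≤ T) (g : ℝ × ℝ × ℝ → ℂ) (hg : Integrable g (nuT T)) :
    ∫ a, g a ∂(nuT T) = ∫ t in (0:ℝ)..T, ∫ w : ℝ × ℝ, g (w.1, w.2, t) := by
  unfold nuT at hg ⊢
  have hmp := measurePreserving_prodAssoc (volume : Measure ℝ) (volume : Measure ℝ)
    (volume.restrict (Ioc (0:ℝ) T))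
  have he : MeasurableEmbedding (MeasurableEquiv.prodAssoc : (ℝ × ℝ) × ℝ ≃ᵐ ℝ × ℝ × ℝ) :=
    MeasurableEquiv.measurableEmbedding _
  have hg' := (hmp.integrable_comp_emb he).mpr hg
  rw [← hmp.integral_comp he, intervalIntegral.integral_of_le hT]
  exact integral_prod_symm _ hg'

end Gauss

/-- second-order expansion of the mean squared hedging error of the variance-optimal hedge (Theorem `errVOapprox`). -/
theorem variance_optimal_hedge_error_expansion
    (μ c : ℝ) (hc : 0 ≤ c) (K : MeasureTheory.Measure ℝ)
    (hK0 : K {0} = 0)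
    (hKmin : ∫⁻ x : ℝ, ENNReal.ofReal (min 1 (x ^ 2)) ∂K ≠ ⊤)
    (R : ℝ) (hR : R ≠ 0) (a b : ℝ)
    (h0 : (0 : ℝ) ∈ Set.Ioo a b) (h2 : (2 : ℝ) ∈ Set.Ioo a b)
    (h2R : 2 * R ∈ Set.Ioo a b)
    (hK5 : ∫⁻ x in {x : ℝ | 1 ≤ |x|}, ENNReal.ofReal (|x| ^ 5) ∂K ≠ ⊤)
    (hKexp : ∀ s ∈ Set.Ioo a b,
      ∫⁻ x in {x : ℝ | 1 ≤ |x|}, ENNReal.ofReal (Real.exp (s * x)) ∂K ≠ ⊤)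
    (σ2 : ℝ) (hσ2 : σ2 = c + ∫ x : ℝ, x ^ 2 ∂K) (hσ2pos : 0 < σ2)
    (σ m s3 s4 : ℝ) (hσ : σ = Real.sqrt σ2) (hm : m = (μ + σ2 / 2) / σ2)
    (hs3 : s3 = (∫ x : ℝ, x ^ 3 ∂K) / σ ^ 3) (hs4 : s4 = (∫ x : ℝ, x ^ 4 ∂K) / σ ^ 4)
    (f : ℝ → ℝ) (hf : ContDiffOn ℝ (⊤ : ℕ∞) f (Set.Ioi 0))
    (l : ℝ → ℝ) (hl : l = fun x => f (Real.exp x) * Real.exp (-R * x))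
    (hlint : ∀ n : ℕ, Integrable (iteratedDeriv n l))
    (T S₀ : ℝ) (hT : 0 < T) (hS₀ : 0 < S₀)
    (eps2 : ℝ → ℂ)
    (heps2 : ∀ lam : ℝ, eps2 lam =
      ∫ u : ℝ, ∫ v : ℝ, ∫ t in (0 : ℝ)..T,
        cpowR S₀ (zLine R u + zLine R v) *
          (kbar μ c K lam (zLine R u) (zLine R v) -
            kbar μ c K lam (zLine R u) 1 * kbar μ c K lam (zLine R v) 1 /
              kbar μ c K lam 1 1) *
          Complex.exp (kappa μ c K lam (zLine R u + zLine R v) * (t : ℂ) +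
            (etaLK μ c K lam (zLine R u) + etaLK μ c K lam (zLine R v) -
              kappa μ c K lam 1 ^ 2 / kbar μ c K lam 1 1) *
              ((T : ℂ) - (t : ℂ))) *
          pCoef l u * pCoef l v) :
    ContDiffOn ℝ 2 eps2 (Set.Icc 0 1) ∧
    eps2 0 = 0 ∧
    iteratedDerivWithin 1 eps2 (Set.Icc 0 1) 0 = 0 ∧
    (1 / 2 : ℂ) * iteratedDerivWithin 2 eps2 (Set.Icc 0 1) 0 =
      (1 / 4 : ℂ) * (σ : ℂ) ^ 4 * ((s4 : ℂ) - (s3 : ℂ) ^ 2) *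
        ∫ t in (0 : ℝ)..T,
          ((Real.exp (-((μ + σ2 / 2) ^ 2 / σ2) * (T - t)) : ℝ) : ℂ) *
          ∫ x : ℝ, (cashGreek σ2 T R l 2 t (S₀ * Real.exp (μ * t + x))) ^ 2
            ∂(gaussianReal 0 (Real.toNNReal (σ2 * t))) := by
  have : SFinite K := lk_sfinite K hK0 hKmin
  have hmom := lk_moment K a b hKmin hKexp
  have hlC : ContDiff ℝ (⊤ : ℕ∞) l := by
    rw [hl]
    refine ContDiff.mul ?_ ?_
    · have h1 : ContDiff ℝ (⊤ : ℕ∞) Real.exp := Real.contDiff_exp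
      exact contDiffOn_univ.mp (hf.comp h1.contDiffOn (fun x _ => Real.exp_pos x))
    · exact Real.contDiff_exp.comp (contDiff_const.mul contDiff_id)
  have hPm := pCoef_measurable l hlC.continuous.measurable
  have hP := pCoef_integrable l hlC hlint
  obtain ⟨G, G1, G2, hC, hG, hG1, hG2⟩ :=
    Jint_isC2 h0 h2 hmom μ c hc σ2 hσ2 hσ2pos R h2R T S₀ hT
  have heq : ∀ x ∈ Icc (0:ℝ) 1, eps2 x =
      ∫ e, G x e * (pCoef l e.1 * pCoef l e.2.1) ∂(nuT T) := by
    intro x hx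
    rw [nuT_iterated T hT.le _ (param_integrable _ hPm hP T hC.m0 hC.b0 x hx), heps2]
    refine integral_congr_ae (Filter.Eventually.of_forall fun u => ?_)
    refine integral_congr_ae (Filter.Eventually.of_forall fun v => ?_)
    refine intervalIntegral.integral_congr fun t _ => ?_
    simp only [hG _ x hx, Jint]
    ring
  have h0I : (0:ℝ) ∈ Icc (0:ℝ) 1 := ⟨le_rfl, zero_le_one⟩
  obtain ⟨r1, r2, r3⟩ := contDiffOn_two_Icc (E := eps2)
    (fun x hx => (param_deriv _ hPm hP T hC.m0 hC.b0 hC.b1 hC.d1 x hx).congr heq (heq x hx))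
    (fun x hx => param_deriv _ hPm hP T hC.m1 hC.b1 hC.b2 hC.d2 x hx)
    (param_continuous _ hPm hP T hC.m2 hC.b2 hC.c2)
  have hσne : (σ2 : ℂ) ≠ 0 := by exact_mod_cast hσ2pos.ne'
  refine ⟨r1, ?_, ?_, ?_⟩
  · rw [heps2]
    have : ∀ y z : ℂ, kbar μ c K 0 y z - kbar μ c K 0 y 1 * kbar μ c K 0 z 1 / kbar μ c K 0 1 1 = 0 := by
      intro y z
      simp only [kbar_at_zero μ c σ2 hσ2]
      field_simp
      ring
    simp [this]
  · rw [r2]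
    simp [hG1]
  · rw [r3, nuT_swap T hT.le _ (param_integrable _ hPm hP T hC.m2 hC.b2 0 h0I),
      ← intervalIntegral.integral_const_mul, ← intervalIntegral.integral_const_mul]
    refine intervalIntegral.integral_congr fun t ht => ?_
    rw [uIcc_of_le hT.le] at ht
    simp only
    rw [gauss_final (K := K) σ2 T R μ c S₀ hσ2 hσ2pos hS₀ l hPm hP t ht.1 ht.2,
      ← integral_const_mul, ← integral_const_mul]
    refine integral_congr_ae (Filter.Eventually.of_forall fun w => ?_)
    simp only [hG2]
    have hσσ : σ ^ 2 = σ2 := by rw [hσ]; exact Real.sq_sqrt hσ2pos.le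
    have hσ0 : σ ≠ 0 := by rw [hσ]; exact (Real.sqrt_pos.mpr hσ2pos).ne'
    have hcoef : ((((∫ x : ℝ, x ^ 4 ∂K) - (∫ x : ℝ, x ^ 3 ∂K) ^ 2 / σ2) / 2 : ℝ) : ℂ) =
        (1 / 2 : ℂ) * (σ : ℂ) ^ 4 * ((s4 : ℂ) - (s3 : ℂ) ^ 2) := by
      have : ((∫ x : ℝ, x ^ 4 ∂K) - (∫ x : ℝ, x ^ 3 ∂K) ^ 2 / σ2) / 2 =
          (1 / 2) * σ ^ 4 * (s4 - s3 ^ 2) := by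
        rw [hs3, hs4, ← hσσ]
        field_simp
      rw [this]
      push_cast
      ring
    rw [hcoef]
    ring
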